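/- arXiv:2401.01047 — 6 statements merged into one kernel-verified Lean document; each statement's English description precedes it below -/
import Mathlib

section
/- Let k ≥ 3 be an integer, γ > 0, and 0 < δ ≤ Δ ≤ 1. Let (ζ_s), (b_s), (c_s), (z_s) be real sequences satisfying |ζ_s − 1| ≤ δ, |b_s| ≤ δ, |c_s − 1| ≤ δ for all s, and let (x_s) satisfy x_{s+1} = γ ζ_s (x_s + b_s + c_s z_s)^{k−1}. Let b̄_0 ≥ 0 and b̄_{s+1} = γ (1+Δ)^k · b̄_s^{k−1}. If |x_0| ≤ b̄_0 and |z_s| ≤ (Δ b̄_s − δ)/(1+δ) for all s ∈ ℕ, then |x_s| ≤ b̄_s for all s ∈ ℕ. -/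
/-- deterministic upper comparison for the perturbed polynomial recursion. -/
theorem perturbed_polynomial_recursion_upper_comparison
    (k : ℕ) (hk : 3 ≤ k) (γ δ Δ : ℝ) (hγ : 0 < γ) (hδ : 0 < δ) (hδΔ : δ ≤ Δ) (hΔ : Δ ≤ 1)
    (ζ b c z x : ℕ → ℝ)
    (hζ : ∀ s, |ζ s - 1| ≤ δ) (hb : ∀ s, |b s| ≤ δ) (hc : ∀ s, |c s - 1| ≤ δ)
    (hx : ∀ s, x (s + 1) = γ * ζ s * (x s + b s + c s * z s) ^ (k - 1))
    (bb : ℕ → ℝ) (hbb0 : 0 ≤ bb 0)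
    (hbb : ∀ s, bb (s + 1) = γ * (1 + Δ) ^ k * bb s ^ (k - 1))
    (hx0 : |x 0| ≤ bb 0)
    (hz : ∀ s : ℕ, |z s| ≤ (Δ * bb s - δ) / (1 + δ)) :
    ∀ s : ℕ, |x s| ≤ bb s := by
  intro s
  induction s with
  | zero => exact hx0
  | succ s ih =>
    have h1 : |ζ s| ≤ 1 + Δ := by
      have h := abs_le.mp (hζ s)
      rw [abs_le]; constructor <;> linarith [h.1, h.2]
    have h2 : |c s| ≤ 1 + δ := by
      have h := abs_le.mp (hc s)
      rw [abs_le]; constructor <;> linarith [h.1, h.2]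
    have h3 : |c s| * |z s| ≤ Δ * bb s - δ := by
      have h := hz s
      rw [le_div_iff₀ (by linarith)] at h
      nlinarith [mul_le_mul_of_nonneg_right h2 (abs_nonneg (z s))]
    have h4 : |x s + b s + c s * z s| ≤ (1 + Δ) * bb s := by
      have e1 := abs_add_le (x s + b s) (c s * z s)
      have e2 := abs_add_le (x s) (b s)
      rw [abs_mul] at e1
      linarith [hb s]
    have h5 := pow_le_pow_left₀ (abs_nonneg _) h4 (k - 1)
    rw [hx, hbb, abs_mul, abs_mul, abs_pow, abs_of_pos hγ]
    have hk1 : (1 + Δ) ^ k = (1 + Δ) * (1 + Δ) ^ (k - 1) := by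
      rw [← pow_succ']; congr 1; omega
    have hD : 0 ≤ 1 + Δ := by linarith
    calc γ * |ζ s| * |x s + b s + c s * z s| ^ (k - 1)
        ≤ γ * (1 + Δ) * ((1 + Δ) * bb s) ^ (k - 1) := by gcongr
      _ = γ * (1 + Δ) ^ k * bb s ^ (k - 1) := by rw [hk1, mul_pow]; ring
end

section
/- Let k ≥ 3 be an integer, γ > 0, and 0 < δ ≤ Δ ≤ 1. Let (ζ_s), (b_s), (c_s), (z_s) be real sequences satisfying |ζ_s − 1| ≤ δ, |b_s| ≤ δ, |c_s − 1| ≤ δ for all s, and let (x_s) satisfy x_{s+1} = γ ζ_s (x_s + b_s + c_s z_s)^{k−1}. Let b̲_0 ≥ 0 and b̲_{s+1} = γ (1−Δ)^k · b̲_s^{k−1}. If |x_0| ≥ b̲_0 and |z_s| ≤ (Δ b̲_s − δ)/(1+δ) for all s ∈ ℕ, then |x_s| ≥ b̲_s for all s ∈ ℕ. -/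
/-- deterministic lower comparison for the perturbed polynomial recursion. -/
theorem perturbed_polynomial_recursion_lower_comparison
    (k : ℕ) (hk : 3 ≤ k) (γ δ Δ : ℝ) (hγ : 0 < γ) (hδ : 0 < δ) (hδΔ : δ ≤ Δ) (hΔ : Δ ≤ 1)
    (ζ b c z x : ℕ → ℝ)
    (hζ : ∀ s, |ζ s - 1| ≤ δ) (hb : ∀ s, |b s| ≤ δ) (hc : ∀ s, |c s - 1| ≤ δ)
    (hx : ∀ s, x (s + 1) = γ * ζ s * (x s + b s + c s * z s) ^ (k - 1))
    (bb : ℕ → ℝ) (hbb0 : 0 ≤ bb 0)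
    (hbb : ∀ s, bb (s + 1) = γ * (1 - Δ) ^ k * bb s ^ (k - 1))
    (hx0 : bb 0 ≤ |x 0|)
    (hz : ∀ s : ℕ, |z s| ≤ (Δ * bb s - δ) / (1 + δ)) :
    ∀ s : ℕ, bb s ≤ |x s| := by
  have hΔ0 : 0 ≤ 1 - Δ := by linarith
  have hbn : ∀ s, 0 ≤ bb s := by
    intro s
    induction s with
    | zero => exact hbb0
    | succ n ih => rw [hbb]; positivity
  intro s
  induction s with
  | zero => exact hx0
  | succ n ih =>
    have hz1 : |z n| * (1 + δ) ≤ Δ * bb n - δ := (le_div_iff₀ (by linarith)).1 (hz n)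
    have hc1 : |c n| ≤ 1 + δ := by
      have := abs_le.1 (hc n)
      exact abs_le.2 ⟨by linarith, by linarith⟩
    have hcz : |c n * z n| ≤ |z n| * (1 + δ) := by
      rw [abs_mul, mul_comm]
      exact mul_le_mul_of_nonneg_left hc1 (abs_nonneg _)
    have h1 : |x n| ≤ |x n + b n + c n * z n| + |b n| + |c n * z n| := by
      have e : x n = (x n + b n + c n * z n) - b n - c n * z n := by ring
      have h2 := abs_sub (x n + b n + c n * z n - b n) (c n * z n)
      have h3 := abs_sub (x n + b n + c n * z n) (b n)
      rw [← e] at h2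
      linarith
    have h4 : (1 - Δ) * bb n ≤ |x n + b n + c n * z n| := by
      have := hb n
      linarith
    have h5 : 1 - Δ ≤ |ζ n| := by
      have := abs_le.1 (hζ n)
      linarith [le_abs_self (ζ n)]
    have h6 : ((1 - Δ) * bb n) ^ (k - 1) ≤ |x n + b n + c n * z n| ^ (k - 1) :=
      pow_le_pow_left₀ (mul_nonneg hΔ0 (hbn n)) h4 _
    have hp : (1 - Δ) ^ k = (1 - Δ) * (1 - Δ) ^ (k - 1) := by
      rw [← pow_succ']
      congr 1
      omega
    rw [hx, hbb, abs_mul, abs_mul, abs_pow, abs_of_pos hγ, hp]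
    calc γ * ((1 - Δ) * (1 - Δ) ^ (k - 1)) * bb n ^ (k - 1)
        = γ * (1 - Δ) * ((1 - Δ) * bb n) ^ (k - 1) := by rw [mul_pow]; ring
      _ ≤ γ * |ζ n| * |x n + b n + c n * z n| ^ (k - 1) := by
        refine mul_le_mul (mul_le_mul_of_nonneg_left h5 hγ.le) h6 ?_ (by positivity)
        exact pow_nonneg (mul_nonneg hΔ0 (hbn n)) _
end

section
/- Let C_k = (k−2)^{k−2}/(k−1)^{k−1}, and define M(k, γ_n, δ) := (1/(k−2)) · (C_k/(γ_n(1+δ)))^{1/(k−2)} and N(k, γ_n, δ) := (1/(1+δ)) · (C_k/(γ_n(1+δ)))^{1/(k−2)} − δ/(1+δ). Then for any T ∈ ℕ, with probability at least 1 − 2T · Φ(−N(k, γ_n, δ)), one has max_{0 ≤ t ≤ T} |X_t| ≤ M(k, γ_n, δ), where Φ denotes the standard Gaussian cumulative distribution function. -/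
open MeasureTheory ProbabilityTheory Filter Real

/-- The standard Gaussian cumulative distribution function `Φ`. -/
noncomputable def stdGaussCDF (x : ℝ) : ℝ := (gaussianReal 0 1 (Set.Iic x)).toReal

/-- `C_k = (k-2)^{k-2}/(k-1)^{k-1}`. -/
noncomputable def Ckconst (k : ℕ) : ℝ := ((k : ℝ) - 2) ^ (k - 2) / ((k : ℝ) - 1) ^ (k - 1)

/-- Deterministic one-step bound. -/
lemma step_bound (m : ℕ) (hm : 1 ≤ m) (γ δ A x z b c w : ℝ) (hγ : 0 < γ) (hδ : 0 < δ)
    (hA : 0 < A)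
    (hAm : γ * (1 + δ) * A ^ m = (m : ℝ) ^ m / ((m : ℝ) + 1) ^ (m + 1))
    (hx : |x| ≤ 1 / (m : ℝ) * A) (hw : |w| ≤ 1 / (1 + δ) * A - δ / (1 + δ))
    (hz : |z - 1| ≤ δ) (hb : |b| ≤ δ) (hc : |c - 1| ≤ δ) :
    |γ * z * (x + b + c * w) ^ (m + 1)| ≤ 1 / (m : ℝ) * A := by
  have hm0 : (0 : ℝ) < m := by exact_mod_cast hm
  have hz' : |z| ≤ 1 + δ := by
    have := abs_add_le (z - 1) 1
    rw [sub_add_cancel, abs_one] at this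
    linarith
  have hc' : |c| ≤ 1 + δ := by
    have := abs_add_le (c - 1) 1
    rw [sub_add_cancel, abs_one] at this
    linarith
  have hcw : |c * w| ≤ A - δ := by
    rw [abs_mul]
    calc |c| * |w| ≤ (1 + δ) * (1 / (1 + δ) * A - δ / (1 + δ)) := by gcongr
      _ = A - δ := by field_simp
  have hsum : |x + b + c * w| ≤ 1 / (m : ℝ) * A + A := by
    have h1 := abs_add_le (x + b) (c * w)
    have h2 := abs_add_le x b
    linarith
  rw [abs_mul, abs_mul, abs_pow, abs_of_pos hγ]
  calc γ * |z| * |x + b + c * w| ^ (m + 1)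
      ≤ γ * (1 + δ) * (1 / (m : ℝ) * A + A) ^ (m + 1) := by gcongr
    _ = (γ * (1 + δ) * A ^ m) * A * (((m : ℝ) + 1) / m) ^ (m + 1) := by
        have : 1 / (m : ℝ) * A + A = A * (((m : ℝ) + 1) / m) := by field_simp; ring
        rw [this, mul_pow, pow_succ A m]; ring
    _ = 1 / (m : ℝ) * A := by
        rw [hAm, div_pow, pow_succ (m : ℝ) m]
        field_simp

/-- Two-sided Gaussian tail bound. -/
lemma tail_bound {Ω : Type} [MeasurableSpace Ω] (μ : Measure Ω) (Z : Ω → ℝ) (hZ : Measurable Z)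
    (hlaw : Measure.map Z μ = gaussianReal 0 1) (N : ℝ) :
    μ {ω | N < |Z ω|} ≤ ENNReal.ofReal (2 * stdGaussCDF (-N)) := by
  have h1 : μ {ω | N < |Z ω|} ≤ gaussianReal 0 1 (Set.Iic (-N) ∪ Set.Ici N) := by
    rw [← hlaw, Measure.map_apply hZ (measurableSet_Iic.union measurableSet_Ici)]
    refine measure_mono fun ω hω => ?_
    rcases lt_abs.1 (show N < |Z ω| from hω) with h | h
    · exact Or.inr h.le
    · exact Or.inl (show Z ω ≤ -N by linarith)
  have h2 : gaussianReal 0 1 (Set.Ici N) = gaussianReal 0 1 (Set.Iic (-N)) := by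
    have h := gaussianReal_map_neg (μ := 0) (v := 1)
    rw [neg_zero] at h
    conv_lhs => rw [← h]
    rw [Measure.map_apply measurable_neg measurableSet_Ici]
    congr 1
    ext y
    simp
  refine h1.trans ((measure_union_le _ _).trans ?_)
  rw [h2, stdGaussCDF, ENNReal.ofReal_mul (by norm_num), ENNReal.ofReal_toReal (measure_ne_top _ _),
    ENNReal.ofReal_ofNat, two_mul]

/-- for any `T`, with probability at least `1 − 2TΦ(−N(k,γ,δ))` the perturbed
polynomial process stays below `M(k,γ,δ)` up to time `T`. -/
theorem perturbed_process_stays_small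
    (k : ℕ) (hk : 3 ≤ k) (n : ℕ) (hn : 0 < n) (γ C δ : ℝ) (hγ : 0 < γ) (hC : 0 < C)
    (hδ : δ = (C + 1) * (n : ℝ) ^ (-(1 : ℝ) / 6))
    (Ω : Type) [MeasurableSpace Ω] (μ : Measure Ω) [IsProbabilityMeasure μ]
    (X ζ b c Z : ℕ → Ω → ℝ)
    (hmeas : ∀ t, Measurable (ζ t) ∧ Measurable (b t) ∧ Measurable (c t) ∧ Measurable (Z t))
    (hX0 : ∀ ω, X 0 ω = 0)
    (hXrec : ∀ t ω, X (t + 1) ω = γ * ζ t ω * (X t ω + b t ω + c t ω * Z t ω) ^ (k - 1))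
    (hZlaw : ∀ t, Measure.map (Z t) μ = gaussianReal 0 1)
    (hZindep : ∀ t, Indep (MeasurableSpace.comap (Z t) inferInstance)
      ((⨆ s ∈ Set.Iic t,
          MeasurableSpace.comap (fun ω => (X s ω, ζ s ω, b s ω, c s ω)) inferInstance)
        ⊔ (⨆ s ∈ Set.Iio t, MeasurableSpace.comap (Z s) inferInstance)) μ)
    (hpert : ∀ᵐ ω ∂μ, ∀ t, |ζ t ω - 1| ≤ δ ∧ |b t ω| ≤ δ ∧ |c t ω - 1| ≤ δ)
    (T : ℕ) :
    ENNReal.ofReal (1 - 2 * T * stdGaussCDF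
        (-((1 / (1 + δ)) * (Ckconst k / (γ * (1 + δ))) ^ (1 / ((k : ℝ) - 2)) - δ / (1 + δ))))
      ≤ μ {ω | ∀ t ≤ T,
            |X t ω| ≤ (1 / ((k : ℝ) - 2)) * (Ckconst k / (γ * (1 + δ))) ^ (1 / ((k : ℝ) - 2))} := by
  have hn0 : (0 : ℝ) < n := by exact_mod_cast hn
  have hδ0 : 0 < δ := by rw [hδ]; positivity
  obtain ⟨m, rfl⟩ : ∃ m, k = m + 2 := ⟨k - 2, by omega⟩
  have hm : 1 ≤ m := by omega
  have hm0 : (0 : ℝ) < m := by exact_mod_cast hm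
  have e1 : ((m + 2 : ℕ) : ℝ) - 2 = m := by push_cast; ring
  have e2 : ((m + 2 : ℕ) : ℝ) - 1 = m + 1 := by push_cast; ring
  have hCk : Ckconst (m + 2) = (m : ℝ) ^ m / ((m : ℝ) + 1) ^ (m + 1) := by
    rw [Ckconst, e1, e2]; rfl
  rw [e1]
  set A : ℝ := (Ckconst (m + 2) / (γ * (1 + δ))) ^ (1 / (m : ℝ)) with hAdef
  have hbase : 0 < Ckconst (m + 2) / (γ * (1 + δ)) := by rw [hCk]; positivity
  have hA : 0 < A := Real.rpow_pos_of_pos hbase _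
  have hAm : γ * (1 + δ) * A ^ m = (m : ℝ) ^ m / ((m : ℝ) + 1) ^ (m + 1) := by
    rw [hAdef, one_div, Real.rpow_inv_natCast_pow hbase.le (by omega), ← hCk]
    field_simp
  set N : ℝ := 1 / (1 + δ) * A - δ / (1 + δ) with hN
  set B : Set Ω := ⋃ t ∈ Finset.range T, {ω | N < |Z t ω|} with hB
  have hBm : MeasurableSet B := by
    refine Finset.measurableSet_biUnion _ fun t _ => ?_
    exact measurableSet_lt measurable_const (hmeas t).2.2.2.abs
  have hμB : μ B ≤ ENNReal.ofReal (2 * T * stdGaussCDF (-N)) := by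
    refine (measure_biUnion_finset_le _ _).trans ?_
    refine (Finset.sum_le_sum fun t _ => tail_bound μ (Z t) (hmeas t).2.2.2 (hZlaw t) N).trans ?_
    rw [Finset.sum_const, Finset.card_range, nsmul_eq_mul, ← ENNReal.ofReal_natCast,
      ← ENNReal.ofReal_mul (by positivity)]
    exact le_of_eq (congrArg _ (by ring))
  have hnn : 0 ≤ 2 * T * stdGaussCDF (-N) :=
    mul_nonneg (by positivity) ENNReal.toReal_nonneg
  calc ENNReal.ofReal (1 - 2 * T * stdGaussCDF (-N))
      = 1 - ENNReal.ofReal (2 * T * stdGaussCDF (-N)) := by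
        rw [ENNReal.ofReal_sub _ hnn, ENNReal.ofReal_one]
    _ ≤ 1 - μ B := tsub_le_tsub_left hμB _
    _ = μ Bᶜ := (prob_compl_eq_one_sub hBm).symm
    _ ≤ _ := by
        refine measure_mono_ae ?_
        filter_upwards [hpert] with ω hω hωB
        have hZ : ∀ t < T, |Z t ω| ≤ N := by
          intro t ht
          by_contra hcon
          exact hωB (Set.mem_biUnion (Finset.mem_coe.2 (Finset.mem_range.2 ht)) (not_le.1 hcon))
        show ∀ t ≤ T, |X t ω| ≤ 1 / (m : ℝ) * A
        intro t
        induction t with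
        | zero => intro _; rw [hX0, abs_zero]; positivity
        | succ t ih =>
          intro ht
          rw [hXrec]
          obtain ⟨h1, h2, h3⟩ := hω t
          exact step_bound m hm γ δ A _ _ _ _ _ hγ hδ0 hA hAm (ih (by omega)) (hZ t (by omega))
            h1 h2 h3
end

section
/- Assume γ_n = n^{o(1)} and γ_n ≫ (log n)^{−(k−2)/2} as n → ∞, and let ε = ε_k = (6k − 11)/(12(k−1)). Then there is an absolute constant C' > 0 such that for any fixed η ∈ (0,1) and t_n := ⌊(1−η) · log_{k−1}( log_{k−1} n / max{log_{k−1} γ_n, 1} )⌋, for all sufficiently large n: P( max_{0 ≤ t ≤ t_n} |X_t| ≤ n^ε / 2 ) ≥ 1 − n^{−C'}. -/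
open MeasureTheory ProbabilityTheory Filter Real

/-- `log_{k-1}(log_{k-1} n / max(log_{k-1} γ, 1))`, the iterated-logarithm quantity. -/
noncomputable def logTerm (k n : ℕ) (γ : ℝ) : ℝ :=
  Real.logb ((k : ℝ) - 1) (Real.logb ((k : ℝ) - 1) n / max (Real.logb ((k : ℝ) - 1) γ) 1)

/-- Gaussian two-sided tail. -/
lemma aux_tail {Ω : Type} [MeasurableSpace Ω] (μ : Measure Ω) [IsProbabilityMeasure μ]
    (Z : Ω → ℝ) (hZ : Measurable Z) (hlaw : Measure.map Z μ = gaussianReal 0 1) (s : ℝ) :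
    μ {ω | s < |Z ω|} ≤ ENNReal.ofReal (4 * Real.exp (-s)) := by
  have he : Real.exp (1/2 : ℝ) ≤ 2 := by
    have h1 := Real.exp_one_lt_d9
    have h2 : Real.exp (1/2 : ℝ) * Real.exp (1/2 : ℝ) = Real.exp 1 := by
      rw [← Real.exp_add]; norm_num
    nlinarith [Real.exp_pos (1/2 : ℝ)]
  have hint : ∀ t : ℝ, Integrable (fun ω => Real.exp (t * Z ω)) μ := by
    intro t
    have h := integrable_exp_mul_gaussianReal (μ := 0) (v := 1) t
    rw [← hlaw] at h
    exact (integrable_map_measure (by fun_prop) hZ.aemeasurable).1 h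
  have hmgf : ∀ t : ℝ, mgf Z μ t = Real.exp (t ^ 2 / 2) := by
    intro t
    rw [mgf_gaussianReal hlaw]; simp
  have h1 := measure_ge_le_exp_mul_mgf (μ := μ) (X := Z) s (zero_le_one' ℝ) (hint 1)
  have h2 := measure_le_le_exp_mul_mgf (μ := μ) (X := Z) (t := -1) (-s) (by norm_num) (hint (-1))
  rw [hmgf] at h1 h2
  have hs : {ω | s < |Z ω|} ⊆ {ω | s ≤ Z ω} ∪ {ω | Z ω ≤ -s} := by
    intro ω hω
    simp only [Set.mem_ofPred_eq, Set.mem_union] at *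
    rcases lt_abs.1 hω with h | h
    · left; exact h.le
    · right; linarith
  have h3 : μ.real {ω | s < |Z ω|} ≤ 4 * Real.exp (-s) := by
    refine (measureReal_mono hs).trans ((measureReal_union_le _ _).trans ?_)
    have e1 : Real.exp ((1:ℝ) ^ 2 / 2) = Real.exp (1/2 : ℝ) := by norm_num
    have e2 : Real.exp ((-1:ℝ) ^ 2 / 2) = Real.exp (1/2 : ℝ) := by norm_num
    rw [e1] at h1
    rw [e2] at h2
    have e3 : -(-1:ℝ) * -s = -s := by ring
    have e4 : -(1:ℝ) * s = -s := by ring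
    rw [e3] at h2
    rw [e4] at h1
    nlinarith [Real.exp_pos (-s)]
  rw [← ofReal_measureReal]
  exact ENNReal.ofReal_le_ofReal h3

/-- Deterministic growth bound. -/
lemma aux_growth (m : ℕ) (hm : 2 ≤ m) (g s A : ℝ) (hg : 0 < g) (hs : 1 ≤ s)
    (hA : 2 * g + 4 * s ≤ A) (T : ℕ) (x ζ b c z : ℕ → ℝ) (hx0 : x 0 = 0)
    (hrec : ∀ t, x (t + 1) = g * ζ t * (x t + b t + c t * z t) ^ m)
    (hζ : ∀ t, |ζ t - 1| ≤ 1) (hb : ∀ t, |b t| ≤ 1) (hc : ∀ t, |c t - 1| ≤ 1)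
    (hz : ∀ t ≤ T, |z t| ≤ s) :
    ∀ t ≤ T, |x t| ≤ A ^ (4 * m ^ t) := by
  have hA2 : 2 ≤ A := by linarith
  have key : ∀ t ≤ T, ∃ e : ℕ, 1 ≤ e ∧ e + 3 ≤ 4 * m ^ t ∧ |x t| ≤ A ^ e := by
    intro t
    induction t with
    | zero => intro _; exact ⟨1, le_rfl, by simp, by rw [hx0]; simp; linarith⟩
    | succ t ih =>
      intro ht
      obtain ⟨e, he1, he2, he3⟩ := ih (by omega)
      refine ⟨m * (e + 1) + 1, by omega, ?_, ?_⟩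
      · have : m * (e + 3) ≤ m * (4 * m ^ t) := Nat.mul_le_mul_left _ he2
        rw [pow_succ]; nlinarith
      · rw [hrec, abs_mul, abs_mul, abs_pow, abs_of_pos hg]
        have h1 : |ζ t| ≤ 2 := by
          have := abs_le.1 (hζ t); exact abs_le.2 ⟨by linarith, by linarith⟩
        have h2 : |c t| ≤ 2 := by
          have := abs_le.1 (hc t); exact abs_le.2 ⟨by linarith, by linarith⟩
        have h3 : |c t * z t| ≤ 2 * s := by
          rw [abs_mul]; exact mul_le_mul h2 (hz t (by omega)) (abs_nonneg _) (by norm_num)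
        have h4 : |x t + b t + c t * z t| ≤ A ^ e + 1 + 2 * s :=
          (abs_add_le _ _).trans (add_le_add ((abs_add_le _ _).trans (add_le_add he3 (hb t))) h3)
        have h5 : A ≤ A ^ e := le_self_pow₀ (by linarith) (by omega)
        have h6 : |x t + b t + c t * z t| ≤ A ^ (e + 1) := by
          rw [pow_succ]; nlinarith
        have h7 : |x t + b t + c t * z t| ^ m ≤ A ^ (m * (e + 1)) := by
          rw [mul_comm m, pow_mul]; exact pow_le_pow_left₀ (abs_nonneg _) h6 _
        have h8 : g * |ζ t| ≤ A := by nlinarith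
        calc g * |ζ t| * |x t + b t + c t * z t| ^ m ≤ A * A ^ (m * (e + 1)) :=
              mul_le_mul h8 h7 (by positivity) (by linarith)
          _ = _ := by ring
  intro t ht
  obtain ⟨e, _, h2, h3⟩ := key t ht
  exact h3.trans (pow_le_pow_right₀ (by linarith) (by omega))

/-- Asymptotic bound. -/
lemma aux_asymp (k : ℕ) (hk : 3 ≤ k) (γ : ℕ → ℝ) (hγpos : ∀ n, 0 < γ n)
    (hγup : Tendsto (fun n : ℕ => Real.log (γ n) / Real.log n) atTop (nhds 0))
    (η : ℝ) (hη : 0 < η) (hη1 : η < 1) (ε : ℝ) (hε : 0 < ε) :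
    ∀ᶠ n : ℕ in atTop,
      (Nat.floor ((1 - η) * logTerm k n (γ n)) : ℝ) + 1 ≤ 2 * n ∧
      (2 * γ n + 4 * (3 * Real.log n)) ^
        (4 * (k - 1) ^ Nat.floor ((1 - η) * logTerm k n (γ n))) ≤ (n : ℝ) ^ ε / 2 := by
  have hk' : (3:ℝ) ≤ k := by exact_mod_cast hk
  set l : ℝ := Real.log ((k:ℝ) - 1) with hl
  have hlpos : 1 / 2 < l := by
    have h1 := Real.log_two_gt_d9
    have h2 : Real.log 2 ≤ l := Real.log_le_log (by norm_num) (by linarith)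
    linarith
  have hl0 : 0 < l := by linarith
  have hlog : Tendsto (fun n : ℕ => Real.log (n:ℝ)) atTop atTop :=
    Real.tendsto_log_atTop.comp tendsto_natCast_atTop_atTop
  set q : ℕ → ℝ := fun n => max (Real.log (γ n) / Real.log n) (l / Real.log n) with hq
  have hq0 : Tendsto q atTop (nhds 0) := by
    have h2 : Tendsto (fun n : ℕ => l / Real.log (n:ℝ)) atTop (nhds 0) :=
      tendsto_const_nhds.div_atTop hlog
    simpa using hγup.max h2
  have hqη : Tendsto (fun n => q n ^ η) atTop (nhds 0) := by
    have := hq0.rpow_const (p := η) (Or.inr hη.le)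
    rwa [Real.zero_rpow hη.ne'] at this
  have hlo : Tendsto (fun x : ℝ => Real.log (14 * x) / (14 * x) ^ η) atTop (nhds 0) :=
    ((isLittleO_log_rpow_atTop hη).tendsto_div_nhds_zero).comp
      (tendsto_id.const_mul_atTop (by norm_num : (0:ℝ) < 14))
  have hlo2 : Tendsto (fun n : ℕ => Real.log (14 * Real.log n) / (14 * Real.log n) ^ η)
      atTop (nhds 0) := hlo.comp hlog
  have hc1 : 0 < ε / 16 := by positivity
  have hc2 : 0 < ε / (32 * 14) := by positivity
  filter_upwards [hlog.eventually_ge_atTop 1, hlog.eventually_ge_atTop (4 * Real.log 2 / ε),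
    hq0.eventually_lt_const one_pos, hqη.eventually_lt_const hc1,
    hlo2.eventually_lt_const hc2, eventually_ge_atTop 1] with n hL1 hL2 hq1 hqs hls hn1
  have hn0 : (0:ℝ) < n := by exact_mod_cast hn1
  set L := Real.log (n:ℝ) with hLdef
  have hL0 : 0 < L := by linarith
  have hqpos : 0 < q n := lt_of_lt_of_le (by positivity) (le_max_right _ _)
  have hql : l / L ≤ q n := le_max_right _ _
  have hqγ : Real.log (γ n) / L ≤ q n := le_max_left _ _
  have hterm : logTerm k n (γ n) = Real.logb ((k:ℝ) - 1) ((q n)⁻¹) := by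
    unfold logTerm
    congr 1
    have hmax : max (Real.logb ((k:ℝ) - 1) (γ n)) 1 = q n * L / l := by
      simp only [hq, ← hLdef]
      rw [max_mul_of_nonneg _ _ hL0.le, ← max_div_div_right hl0.le]
      congr 1
      · rw [Real.logb, ← hl]; field_simp
      · field_simp
    rw [hmax, Real.logb, ← hl, ← hLdef]
    field_simp
  rw [hterm]
  set T := Nat.floor ((1 - η) * Real.logb ((k:ℝ) - 1) ((q n)⁻¹)) with hT
  have hb1 : (1:ℝ) < (k:ℝ) - 1 := by linarith
  have hRgt : 1 ≤ (q n)⁻¹ := (one_le_inv₀ hqpos).2 hq1.le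
  have hTle : (T:ℝ) ≤ (1 - η) * Real.logb ((k:ℝ) - 1) ((q n)⁻¹) :=
    Nat.floor_le (mul_nonneg (by linarith) (Real.logb_nonneg hb1 hRgt))
  have hmT : ((k:ℝ) - 1) ^ T ≤ (q n)⁻¹ ^ (1 - η) := by
    rw [← Real.rpow_natCast]
    refine (Real.rpow_le_rpow_of_exponent_le hb1.le hTle).trans (le_of_eq ?_)
    rw [mul_comm, Real.rpow_mul (by linarith), Real.rpow_logb (by linarith) (by linarith)
      (by positivity)]
  have hR2L : (q n)⁻¹ ≤ 2 * L := by
    rw [inv_le_comm₀ hqpos (by positivity)]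
    refine le_trans ?_ hql
    rw [inv_eq_one_div, div_le_div_iff₀ (by positivity) hL0]
    nlinarith
  have hR1 : (q n)⁻¹ ^ (1 - η) ≤ (q n)⁻¹ := by
    conv_rhs => rw [← Real.rpow_one (q n)⁻¹]
    exact Real.rpow_le_rpow_of_exponent_le hRgt (by linarith)
  have hLn : L ≤ n := (Real.log_le_sub_one_of_pos hn0).trans (by linarith)
  constructor
  · have h1 : (T:ℝ) + 1 ≤ 2 ^ T := by
      have : T + 1 ≤ 2 ^ T := Nat.lt_two_pow_self
      exact_mod_cast this
    have h2 : (2:ℝ) ^ T ≤ ((k:ℝ) - 1) ^ T := pow_le_pow_left₀ (by norm_num) (by linarith) _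
    linarith
  · have hγn := hγpos n
    set A := 2 * γ n + 4 * (3 * L) with hA
    have hA0 : 0 < A := by positivity
    have hlogA : Real.log A ≤ q n * L + Real.log (14 * L) := by
      have h14 : 0 < 14 * L := by positivity
      have hAle : A ≤ max (γ n) 1 * (14 * L) := by
        have h1 := le_max_left (γ n) 1
        have h2 := le_max_right (γ n) 1
        nlinarith [mul_nonneg (sub_nonneg.2 h2) hL0.le, mul_le_mul h1 hL1 zero_le_one (by linarith)]
      have hmp : 0 < max (γ n) 1 := lt_max_of_lt_right one_pos
      have h3 : Real.log (max (γ n) 1) ≤ q n * L := by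
        rcases max_cases (γ n) 1 with ⟨h, _⟩ | ⟨h, _⟩
        · rw [h]; rwa [div_le_iff₀ hL0] at hqγ
        · rw [h, Real.log_one]; positivity
      calc Real.log A ≤ Real.log (max (γ n) 1 * (14 * L)) := Real.log_le_log hA0 hAle
        _ = Real.log (max (γ n) 1) + Real.log (14 * L) := Real.log_mul hmp.ne' h14.ne'
        _ ≤ _ := by linarith
    have hlog14 : 0 ≤ Real.log (14 * L) := Real.log_nonneg (by linarith)
    have hP0 : 0 ≤ (q n)⁻¹ ^ (1 - η) := by positivity
    have hp1 : (q n)⁻¹ ^ (1 - η) * (q n * L) ≤ ε / 16 * L := by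
      have : (q n)⁻¹ ^ (1 - η) * q n = q n ^ η := by
        rw [Real.inv_rpow hqpos.le, ← Real.rpow_neg hqpos.le]
        conv_lhs => rw [← Real.rpow_one (q n)]
        rw [← Real.rpow_mul hqpos.le, ← Real.rpow_add hqpos]; congr 1; ring
      rw [← mul_assoc, this]
      exact mul_le_mul_of_nonneg_right hqs.le hL0.le
    have hp2 : (q n)⁻¹ ^ (1 - η) * Real.log (14 * L) ≤ ε / 16 * L := by
      have h14 : 0 < 14 * L := by positivity
      have h1 : (q n)⁻¹ ^ (1 - η) ≤ (14 * L) ^ (1 - η) :=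
        Real.rpow_le_rpow (by positivity) (by linarith) (by linarith)
      rw [div_lt_iff₀ (by positivity)] at hls
      have h2 : (14 * L) ^ (1 - η) * (14 * L) ^ η = 14 * L := by
        rw [← Real.rpow_add h14]; simp
      calc _ ≤ (14 * L) ^ (1 - η) * (ε / (32 * 14) * (14 * L) ^ η) :=
            mul_le_mul h1 hls.le hlog14 (by positivity)
        _ = ε / (32 * 14) * ((14 * L) ^ (1 - η) * (14 * L) ^ η) := by ring
        _ = ε / 32 * L := by rw [h2]; ring
        _ ≤ _ := by nlinarith
    have hL2' : Real.log 2 ≤ ε / 4 * L := by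
      rw [div_le_iff₀ hε] at hL2; linarith
    have hcast : ((4 * (k - 1) ^ T : ℕ) : ℝ) = 4 * ((k:ℝ) - 1) ^ T := by
      push_cast [Nat.cast_sub (show 1 ≤ k by omega)]; ring
    rw [← Real.log_le_log_iff (by positivity) (by positivity), Real.log_pow, hcast,
      Real.log_div (by positivity) (by norm_num), Real.log_rpow hn0, ← hLdef]
    have h5 : ((k:ℝ) - 1) ^ T * Real.log A ≤
        (q n)⁻¹ ^ (1 - η) * (q n * L + Real.log (14 * L)) := by
      refine (mul_le_mul_of_nonneg_left hlogA (by positivity)).trans ?_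
      exact mul_le_mul_of_nonneg_right hmT (by positivity)
    nlinarith [mul_pos hε hL0]

/-- with probability at least `1 − n^{−C'}`, the perturbed polynomial process
stays below `n^ε/2` for the first `⌊(1−η) log_{k−1}(log_{k−1} n / max(log_{k−1} γ_n, 1))⌋`
steps. -/
theorem perturbed_process_stays_small_iterated_log
    (k : ℕ) (hk : 3 ≤ k) (C : ℝ) (hC : 0 < C)
    (Ω : Type) [MeasurableSpace Ω] (μ : Measure Ω) [IsProbabilityMeasure μ]
    (γ : ℕ → ℝ) (hγpos : ∀ n, 0 < γ n)
    (hγup : Tendsto (fun n : ℕ => Real.log (γ n) / Real.log n) atTop (nhds 0))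
    (hγlow : Tendsto (fun n : ℕ => γ n * Real.log n ^ (((k : ℝ) - 2) / 2)) atTop atTop)
    (X ζ b c Z : ℕ → ℕ → Ω → ℝ)
    (hmeas : ∀ n t, Measurable (ζ n t) ∧ Measurable (b n t) ∧ Measurable (c n t) ∧
      Measurable (Z n t))
    (hX0 : ∀ n ω, X n 0 ω = 0)
    (hXrec : ∀ n t ω,
      X n (t + 1) ω = γ n * ζ n t ω * (X n t ω + b n t ω + c n t ω * Z n t ω) ^ (k - 1))
    (hZlaw : ∀ n t, Measure.map (Z n t) μ = gaussianReal 0 1)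
    (hZindep : ∀ n t, Indep (MeasurableSpace.comap (Z n t) inferInstance)
      ((⨆ s ∈ Set.Iic t,
          MeasurableSpace.comap (fun ω => (X n s ω, ζ n s ω, b n s ω, c n s ω)) inferInstance)
        ⊔ (⨆ s ∈ Set.Iio t, MeasurableSpace.comap (Z n s) inferInstance)) μ)
    (hpert : ∀ n, ∀ᵐ ω ∂μ, ∀ t,
      |ζ n t ω - 1| ≤ (C + 1) * (n : ℝ) ^ (-(1 : ℝ) / 6) ∧
      |b n t ω| ≤ (C + 1) * (n : ℝ) ^ (-(1 : ℝ) / 6) ∧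
      |c n t ω - 1| ≤ (C + 1) * (n : ℝ) ^ (-(1 : ℝ) / 6)) :
    ∃ C' : ℝ, 0 < C' ∧ ∀ η : ℝ, 0 < η → η < 1 →
      ∀ᶠ n : ℕ in atTop,
        ENNReal.ofReal (1 - (n : ℝ) ^ (-C'))
          ≤ μ {ω | ∀ t ≤ Nat.floor ((1 - η) * logTerm k n (γ n)),
                |X n t ω| ≤ (n : ℝ) ^ ((6 * (k : ℝ) - 11) / (12 * ((k : ℝ) - 1))) / 2} := by
  have hk' : (3:ℝ) ≤ k := by exact_mod_cast hk
  refine ⟨1, one_pos, fun η hη hη1 => ?_⟩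
  have hε : 0 < (6 * (k : ℝ) - 11) / (12 * ((k : ℝ) - 1)) := div_pos (by linarith) (by linarith)
  have hlog : Tendsto (fun n : ℕ => Real.log (n:ℝ)) atTop atTop :=
    Real.tendsto_log_atTop.comp tendsto_natCast_atTop_atTop
  have hδ : Tendsto (fun n : ℕ => (C + 1) * (n : ℝ) ^ (-(1 : ℝ) / 6)) atTop (nhds 0) := by
    have h := (tendsto_rpow_neg_atTop (show (0:ℝ) < 1 / 6 by norm_num)).comp
      (tendsto_natCast_atTop_atTop (R := ℝ))
    have h2 := h.const_mul (C + 1)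
    rw [mul_zero] at h2
    refine h2.congr fun n => ?_
    simp only [Function.comp]
    norm_num
  filter_upwards [aux_asymp k hk γ hγpos hγup η hη hη1 _ hε, hlog.eventually_ge_atTop 1,
    hδ.eventually_lt_const one_pos, eventually_ge_atTop 8] with n hn hL hδn hn8
  obtain ⟨hT, hA⟩ := hn
  set T := Nat.floor ((1 - η) * logTerm k n (γ n)) with hTdef
  have hn8' : (8:ℝ) ≤ n := by exact_mod_cast hn8
  have hn0 : (0:ℝ) < n := by linarith
  set s := 3 * Real.log (n:ℝ) with hs
  set B : Set Ω := ⋃ t ∈ Finset.range (T + 1), {ω | s < |Z n t ω|} with hB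
  have hBm : MeasurableSet B := by
    refine Finset.measurableSet_biUnion _ fun t _ => ?_
    exact measurableSet_lt measurable_const (hmeas n t).2.2.2.abs
  have hBle : μ B ≤ ENNReal.ofReal ((n:ℝ) ^ (-(1:ℝ))) := by
    have hexp : Real.exp (-s) = ((n:ℝ) ^ 3)⁻¹ := by
      rw [Real.exp_neg, hs, mul_comm, Real.exp_mul, Real.exp_log hn0]
      norm_cast
    calc μ B ≤ ∑ t ∈ Finset.range (T + 1), μ {ω | s < |Z n t ω|} := measure_biUnion_finset_le _ _
      _ ≤ ∑ t ∈ Finset.range (T + 1), ENNReal.ofReal (4 * Real.exp (-s)) :=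
          Finset.sum_le_sum fun t _ => aux_tail μ _ (hmeas n t).2.2.2 (hZlaw n t) s
      _ = ENNReal.ofReal (((T:ℝ) + 1) * (4 * Real.exp (-s))) := by
          rw [Finset.sum_const, Finset.card_range, nsmul_eq_mul,
            ENNReal.ofReal_mul (p := (T:ℝ) + 1) (by positivity), ← ENNReal.ofReal_natCast,
            Nat.cast_add, Nat.cast_one]
      _ ≤ _ := by
          apply ENNReal.ofReal_le_ofReal
          rw [hexp, Real.rpow_neg_one]
          calc ((T:ℝ) + 1) * (4 * ((n:ℝ) ^ 3)⁻¹) ≤ (2 * n) * (4 * ((n:ℝ) ^ 3)⁻¹) :=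
                mul_le_mul_of_nonneg_right hT (by positivity)
            _ = 8 / n * (n:ℝ)⁻¹ := by field_simp; norm_num
            _ ≤ 1 * (n:ℝ)⁻¹ := by
                apply mul_le_mul_of_nonneg_right _ (by positivity)
                rw [div_le_one hn0]; exact hn8'
            _ = _ := one_mul _
  calc ENNReal.ofReal (1 - (n : ℝ) ^ (-(1:ℝ)))
      = 1 - ENNReal.ofReal ((n : ℝ) ^ (-(1:ℝ))) := by
        rw [ENNReal.ofReal_sub _ (by positivity), ENNReal.ofReal_one]
    _ ≤ 1 - μ B := tsub_le_tsub_left hBle 1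
    _ = μ Bᶜ := (prob_compl_eq_one_sub hBm).symm
    _ ≤ _ := by
        apply measure_mono_ae
        filter_upwards [hpert n] with ω hω hωB t ht
        have hz : ∀ t ≤ T, |Z n t ω| ≤ s := by
          intro t ht
          by_contra hcon
          apply hωB
          simp only [hB, Set.mem_iUnion]
          exact ⟨t, Finset.mem_range.2 (by omega), not_le.1 hcon⟩
        have hA1 : 1 ≤ 2 * γ n + 4 * s := by have := hγpos n; linarith
        refine (aux_growth (k - 1) (by omega) (γ n) s _ (hγpos n) (by linarith) le_rfl T
          (fun t => X n t ω) (fun t => ζ n t ω) (fun t => b n t ω) (fun t => c n t ω)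
          (fun t => Z n t ω) (hX0 n ω) (fun t => hXrec n t ω)
          (fun t => (hω t).1.trans hδn.le) (fun t => (hω t).2.1.trans hδn.le)
          (fun t => (hω t).2.2.trans hδn.le) hz t ht).trans (le_trans ?_ hA)
        exact pow_le_pow_right₀ hA1
          (Nat.mul_le_mul_left _ (Nat.pow_le_pow_right (by omega) ht))
end

section
/- Assume γ_n = n^{o(1)} and γ_n ≫ (log n)^{−(k−2)/2} as n → ∞, and let ε = ε_k = (6k − 11)/(12(k−1)). Fix η > 0 and Δ ∈ (δ, 1), define m(Δ, L) := max{ ((1+Δ)/(γ_n (1−Δ)^k))^{1/(k−2)}, L } and t_n := ⌊(1+η) · log_{k−1}( log_{k−1} n / max{log_{k−1} γ_n, 1} )⌋. Then there is an absolute constant C' > 0 such that for L and n sufficiently large and for any t ∈ ℕ with P(|X_t| ≥ m(Δ,L)) > 0: P( |X_{t + t_n}| ≥ n^ε | |X_t| ≥ m(Δ, L) ) ≥ 1 − C' · exp( −Δ² m(Δ, L)² / 8 ). -/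
open MeasureTheory ProbabilityTheory Filter Real

/-- Gaussian two-sided tail bound. -/
lemma pps_gauss_tail (x : ℝ) (hx : 0 ≤ x) :
    gaussianReal 0 1 {z | x < |z|} ≤ ENNReal.ofReal (2 * Real.exp (-x ^ 2 / 2)) := by
  have h1 : HasSubgaussianMGF (fun z : ℝ => z) 1 (gaussianReal 0 1) :=
    ⟨fun t => integrable_exp_mul_gaussianReal t, fun t => by
      rw [mgf_fun_id_gaussianReal]; simp⟩
  have a1 := h1.measure_ge_le hx
  have a2 := h1.neg.measure_ge_le hx
  have hsub : {z : ℝ | x < |z|} ⊆ {z | x ≤ z} ∪ {z | x ≤ (-(fun z : ℝ => z)) z} := by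
    intro z hz
    rcases lt_abs.1 (show x < |z| from hz) with h | h
    · exact Or.inl h.le
    · exact Or.inr h.le
  rw [← ENNReal.ofReal_toReal (measure_ne_top (gaussianReal 0 1) {z | x < |z|})]
  apply ENNReal.ofReal_le_ofReal
  have := (measureReal_mono (μ := gaussianReal 0 1) hsub).trans (measureReal_union_le _ _)
  simp only [NNReal.coe_one, mul_one] at a1 a2
  change (gaussianReal 0 1).real _ ≤ _
  linarith

/-- The deterministic comparison sequence. -/
noncomputable def ppsSeq (k : ℕ) (g m : ℝ) : ℕ → ℝ
  | 0 => m
  | j + 1 => g * ppsSeq k g m j ^ (k - 1)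

lemma ppsSeq_pos (k : ℕ) (g m : ℝ) (hg : 0 < g) (hm : 0 < m) (j : ℕ) : 0 < ppsSeq k g m j := by
  induction j with
  | zero => exact hm
  | succ j ih => exact mul_pos hg (pow_pos ih _)

lemma ppsSeq_lower (k : ℕ) (hk : 3 ≤ k) (g m Δ : ℝ) (hg : 0 < g) (hm : 0 < m) (hΔ : 0 < Δ)
    (h : 1 + Δ ≤ g * m ^ (k - 2)) (j : ℕ) : (1 + Δ) ^ j * m ≤ ppsSeq k g m j := by
  induction j with
  | zero => simp [ppsSeq]
  | succ j ih =>
    have hp := ppsSeq_pos k g m hg hm j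
    have hge : m ≤ ppsSeq k g m j := by
      refine le_trans ?_ ih
      have : 1 ≤ (1 + Δ) ^ j := one_le_pow₀ (by linarith)
      nlinarith
    have h2 : 1 + Δ ≤ g * ppsSeq k g m j ^ (k - 2) := by
      refine h.trans ?_
      gcongr
    have e : k - 1 = (k - 2) + 1 := by omega
    calc (1 + Δ) ^ (j + 1) * m = (1 + Δ) * ((1 + Δ) ^ j * m) := by ring
      _ ≤ (1 + Δ) * ppsSeq k g m j := by gcongr
      _ ≤ (g * ppsSeq k g m j ^ (k - 2)) * ppsSeq k g m j := by gcongr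
      _ = ppsSeq k g m (j + 1) := by
        simp only [ppsSeq]; rw [e, pow_succ]; ring

lemma ppsSeq_log (k : ℕ) (hk : 3 ≤ k) (g m : ℝ) (hg : 0 < g) (hm : 0 < m) (j : ℕ) :
    Real.log (ppsSeq k g m j) + Real.log g / ((k : ℝ) - 2)
      = ((k : ℝ) - 1) ^ j * (Real.log m + Real.log g / ((k : ℝ) - 2)) := by
  have hk' : (3 : ℝ) ≤ k := by exact_mod_cast hk
  have hne : (k : ℝ) - 2 ≠ 0 := by linarith
  induction j with
  | zero => simp [ppsSeq]
  | succ j ih =>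
    have hp := ppsSeq_pos k g m hg hm j
    simp only [ppsSeq]
    rw [Real.log_mul hg.ne' (pow_pos hp _).ne', Real.log_pow, pow_succ', mul_assoc, ← ih,
      Nat.cast_sub (by omega)]
    field_simp
    push_cast
    ring

/-- The threshold `m(Δ, L)`. -/
noncomputable def ppsM (k : ℕ) (γ Δ L : ℝ) : ℝ :=
  max (((1 + Δ) / (γ * (1 - Δ) ^ k)) ^ (1 / ((k : ℝ) - 2))) L

lemma ppsM_pow (k : ℕ) (hk : 3 ≤ k) (γ Δ L : ℝ) (hγ : 0 < γ) (hΔ : 0 < Δ) (hΔ1 : Δ < 1) :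
    1 + Δ ≤ (γ * (1 - Δ) ^ k) * ppsM k γ Δ L ^ (k - 2) := by
  have hk' : (3 : ℝ) ≤ k := by exact_mod_cast hk
  have hg : 0 < γ * (1 - Δ) ^ k := mul_pos hγ (pow_pos (by linarith) _)
  set g := γ * (1 - Δ) ^ k
  have hb : 0 < (1 + Δ) / g := by positivity
  have h1 : ((1 + Δ) / g) = (((1 + Δ) / g) ^ (1 / ((k : ℝ) - 2))) ^ (k - 2) := by
    rw [← Real.rpow_natCast, ← Real.rpow_mul hb.le, Nat.cast_sub (by omega)]
    push_cast
    rw [one_div, inv_mul_cancel₀ (by linarith), Real.rpow_one]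
  have h2 : (1 + Δ) / g ≤ ppsM k γ Δ L ^ (k - 2) := by
    rw [h1]
    exact pow_le_pow_left₀ (by positivity) (le_max_left _ _) _
  rw [div_le_iff₀ hg] at h2
  linarith

set_option maxHeartbeats 1000000 in
lemma pps_growth (k : ℕ) (hk : 3 ≤ k) (γ : ℕ → ℝ) (hγpos : ∀ n, 0 < γ n)
    (hγup : Tendsto (fun n : ℕ => Real.log (γ n) / Real.log n) atTop (nhds 0))
    (η : ℝ) (hη : 0 < η) (Δ : ℝ) (hΔ : 0 < Δ) (hΔ1 : Δ < 1) (L : ℝ) (hL1 : 1 ≤ L)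
    (hL : Real.exp (-(k * Real.log (1 - Δ)) / ((k : ℝ) - 2)) ≤ L) :
    ∀ᶠ n : ℕ in atTop, (n : ℝ) ^ ((6 * (k : ℝ) - 11) / (12 * ((k : ℝ) - 1))) ≤
      ppsSeq k (γ n * (1 - Δ) ^ k) (ppsM k (γ n) Δ L)
        (Nat.floor ((1 + η) * logTerm k n (γ n))) := by
  have hk' : (3 : ℝ) ≤ k := by exact_mod_cast hk
  set B : ℝ := (k : ℝ) - 1 with hB
  have hB2 : 2 ≤ B := by linarith
  have hlB : 0 < Real.log B := Real.log_pos (by linarith)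
  have hk2 : 0 < (k : ℝ) - 2 := by linarith
  have hlΔ : 0 < Real.log (1 + Δ) := Real.log_pos (by linarith)
  set c : ℝ := min (Real.log (1 + Δ)) (Real.log B) / ((k : ℝ) - 2) with hc
  have hcpos : 0 < c := div_pos (lt_min hlΔ hlB) hk2
  obtain ⟨K, hK, hK1⟩ := ((tendsto_rpow_atTop hη).eventually_ge_atTop (2 * B * Real.log B / c)
    |>.and (eventually_ge_atTop 1)).exists
  have hlog : Tendsto (fun n : ℕ => Real.log (n : ℝ)) atTop atTop :=
    Real.tendsto_log_atTop.comp tendsto_natCast_atTop_atTop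
  have hKpos : 0 < K := by linarith
  filter_upwards [hlog.eventually_ge_atTop (K * Real.log B), hlog.eventually_gt_atTop 0,
    eventually_ge_atTop 2, hγup.eventually_le_const (show (0 : ℝ) < 1 / K by positivity)]
    with n hn1 hn0 hn2 hn3
  have hnpos : (0 : ℝ) < n := by exact_mod_cast (by omega : 0 < n)
  set G := γ n with hG
  have hGpos : 0 < G := hγpos n
  set g := G * (1 - Δ) ^ k with hg
  have h1Δ : 0 < 1 - Δ := by linarith
  have hgpos : 0 < g := by positivity
  set m := ppsM k G Δ L with hm
  have hmL : L ≤ m := le_max_right _ _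
  have hmpos : 0 < m := by linarith
  set T := Nat.floor ((1 + η) * logTerm k n G) with hT
  have hlogG : Real.log G ≤ Real.log n / K := by
    rw [div_le_iff₀ hn0] at hn3
    calc _ ≤ _ := hn3
      _ = _ := by ring
  have hlogGn : Real.log G ≤ Real.log n := hlogG.trans (div_le_self hn0.le hK1)
  have hl1Δ : Real.log (1 - Δ) < 0 := Real.log_neg h1Δ (by linarith)
  have hlg : Real.log g = Real.log G + k * Real.log (1 - Δ) := by
    rw [hg, Real.log_mul hGpos.ne' (by positivity), Real.log_pow]
  have hlgn : Real.log g ≤ Real.log n := by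
    rw [hlg]; nlinarith
  set M := max (Real.logb B G) 1 with hM
  have hMpos : 0 < M := lt_of_lt_of_le one_pos (le_max_right _ _)
  set R := Real.logb B n / M with hR
  have hlbn : 0 < Real.logb B n := div_pos hn0 hlB
  have hRpos : 0 < R := div_pos hlbn hMpos
  have hKR : K ≤ R := by
    rw [hR, le_div_iff₀ hMpos, hM, mul_comm, ← le_div_iff₀ hKpos]
    apply max_le
    · rw [Real.logb, Real.logb, div_right_comm]
      gcongr
    · rw [le_div_iff₀ hKpos, Real.logb, le_div_iff₀ hlB]
      linarith
  -- lower bound for the initial log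
  have hu1 : Real.log (1 + Δ) / ((k : ℝ) - 2) ≤ Real.log m + Real.log g / ((k : ℝ) - 2) := by
    have := Real.log_le_log (by linarith) (ppsM_pow k hk G Δ L hGpos hΔ hΔ1)
    rw [Real.log_mul hgpos.ne' (by positivity), Real.log_pow, Nat.cast_sub (by omega)] at this
    push_cast at this
    rw [← sub_le_iff_le_add, ← sub_div, div_le_iff₀ hk2]
    linarith
  have hu2 : Real.log G / ((k : ℝ) - 2) ≤ Real.log m + Real.log g / ((k : ℝ) - 2) := by
    have h3 : -(k * Real.log (1 - Δ)) / ((k : ℝ) - 2) ≤ Real.log m := by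
      rw [Real.le_log_iff_exp_le hmpos]
      exact hL.trans hmL
    rw [hlg, add_div]
    rw [neg_div] at h3
    linarith
  set u := Real.log m + Real.log g / ((k : ℝ) - 2) with hu
  have hcu : c * M ≤ u := by
    rcases le_total (Real.logb B G) 1 with h | h
    · rw [hM, max_eq_right h, mul_one]
      refine le_trans ?_ hu1
      rw [hc]; gcongr; exact min_le_left _ _
    · rw [hM, max_eq_left h]
      refine le_trans ?_ hu2
      have : Real.log G = Real.log B * Real.logb B G := by
        rw [Real.logb]; field_simp
      rw [this, hc, div_mul_eq_mul_div]
      gcongr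
      exact min_le_right _ _
  have hBT : R * R ^ η / B ≤ B ^ T := by
    have h1 : (1 + η) * logTerm k n G < T + 1 := Nat.lt_floor_add_one _
    have h2 : B ^ ((1 + η) * logTerm k n G) ≤ B ^ ((T : ℝ) + 1) :=
      Real.rpow_le_rpow_of_exponent_le (by linarith) h1.le
    have h3 : B ^ ((1 + η) * logTerm k n G) = R * R ^ η := by
      rw [mul_comm, Real.rpow_mul (by linarith)]
      have : B ^ logTerm k n G = R :=
        Real.rpow_logb (by linarith) (by linarith) hRpos
      rw [this, Real.rpow_add hRpos, Real.rpow_one]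
    rw [h3, Real.rpow_add (by linarith), Real.rpow_one, Real.rpow_natCast] at h2
    rwa [div_le_iff₀ (by linarith)]
  have hfin : 2 * Real.log n ≤ B ^ T * u := by
    have hRη : 2 * B * Real.log B / c ≤ R ^ η :=
      hK.trans (Real.rpow_le_rpow hKpos.le hKR hη.le)
    calc 2 * Real.log n = (R * (2 * B * Real.log B / c) / B) * (c * M) := by
          rw [hR, Real.logb]; field_simp
      _ ≤ (R * R ^ η / B) * (c * M) := by gcongr
      _ ≤ B ^ T * u := by gcongr
  have hlogeq := ppsSeq_log k hk g m hgpos hmpos T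
  have hap := ppsSeq_pos k g m hgpos hmpos T
  rw [← Real.log_le_log_iff (by positivity) hap, Real.log_rpow hnpos]
  have he : (6 * (k : ℝ) - 11) / (12 * B) ≤ 1 := by
    rw [div_le_one (by positivity)]; linarith
  have he2 : Real.log g / ((k : ℝ) - 2) ≤ Real.log n := by
    rw [div_le_iff₀ hk2]
    exact hlgn.trans (le_mul_of_one_le_right hn0.le (by linarith))
  have he3 : (6 * (k : ℝ) - 11) / (12 * B) * Real.log n ≤ Real.log n :=
    mul_le_of_le_one_left hn0.le he
  linarith

/-- Summation of the failure probabilities. -/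
lemma pps_sum (k : ℕ) (hk : 3 ≤ k) (g m Δ : ℝ) (hg : 0 < g) (hΔ : 0 < Δ)
    (hm1 : 1 ≤ m) (hm : 4 / Δ ^ 3 ≤ m)
    (h : 1 + Δ ≤ g * m ^ (k - 2)) (N : ℕ) :
    ∑ j ∈ Finset.range N, 2 * Real.exp (-(Δ * ppsSeq k g m j / 2) ^ 2 / 2) ≤
      4 * Real.exp (-Δ ^ 2 * m ^ 2 / 8) := by
  have hm0 : 0 < m := by linarith
  have key : ∀ j, Real.exp (-(Δ * ppsSeq k g m j / 2) ^ 2 / 2) ≤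
      Real.exp (-Δ ^ 2 * m ^ 2 / 8) * (1 / 2) ^ j := by
    intro j
    have h1 := ppsSeq_lower k hk g m Δ hg hm0 hΔ h j
    have h2 : 1 + j * Δ ≤ (1 + Δ) ^ j := one_add_mul_le_pow (by linarith) j
    have h3 : (1 + j * Δ) * m ≤ ppsSeq k g m j := le_trans (by gcongr) h1
    have h4 : ((1 + j * Δ) * m) ^ 2 ≤ ppsSeq k g m j ^ 2 := by gcongr
    have h5 : 4 ≤ Δ ^ 3 * m ^ 2 := by
      rw [div_le_iff₀ (by positivity)] at hm
      have : 0 < Δ ^ 3 := by positivity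
      nlinarith
    have hj : (0 : ℝ) ≤ j := Nat.cast_nonneg j
    have h6 : -(Δ * ppsSeq k g m j / 2) ^ 2 / 2 ≤ -Δ ^ 2 * m ^ 2 / 8 + j * (-1) := by
      have h7 : Δ ^ 2 * ((1 + j * Δ) * m) ^ 2 ≤ Δ ^ 2 * ppsSeq k g m j ^ 2 := by gcongr
      have h8 : (j : ℝ) * 4 ≤ j * (Δ ^ 3 * m ^ 2) := by gcongr
      have h9 : 0 ≤ Δ ^ 2 * (j * Δ * m) ^ 2 := by positivity
      nlinarith
    have h10 : Real.exp (-1) ≤ 1 / 2 := by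
      rw [Real.exp_neg, one_div]
      apply inv_anti₀ (by norm_num)
      have := Real.add_one_le_exp (1 : ℝ)
      linarith
    calc _ ≤ Real.exp (-Δ ^ 2 * m ^ 2 / 8 + j * (-1)) := Real.exp_le_exp.2 h6
      _ = Real.exp (-Δ ^ 2 * m ^ 2 / 8) * Real.exp (-1) ^ j := by
        rw [Real.exp_add, Real.exp_nat_mul]
      _ ≤ _ := by gcongr
  calc _ ≤ ∑ j ∈ Finset.range N, 2 * (Real.exp (-Δ ^ 2 * m ^ 2 / 8) * (1 / 2) ^ j) := by
        gcongr with j _; exact key j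
    _ = 2 * Real.exp (-Δ ^ 2 * m ^ 2 / 8) * ∑ j ∈ Finset.range N, (1 / 2 : ℝ) ^ j := by
        rw [Finset.mul_sum]; apply Finset.sum_congr rfl; intros; ring
    _ ≤ 2 * Real.exp (-Δ ^ 2 * m ^ 2 / 8) * 2 := by
        gcongr; exact sum_geometric_two_le N
    _ = _ := by ring

/-- One step of the process on the good event. -/
lemma pps_step (k : ℕ) (γ Δ δ a x ζ b c z : ℝ) (hγ : 0 < γ) (hΔ : 0 < Δ) (hΔ1 : Δ < 1)
    (hδ : δ ≤ Δ / 4) (ha : 1 ≤ a) (hx : a ≤ |x|) (hζ : |ζ - 1| ≤ δ) (hb : |b| ≤ δ)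
    (hc : |c - 1| ≤ δ) (hz : |z| ≤ Δ * a / 2) (hk : 1 ≤ k) :
    γ * (1 - Δ) ^ k * a ^ (k - 1) ≤ |γ * ζ * (x + b + c * z) ^ (k - 1)| := by
  have hδ0 : 0 ≤ δ := (abs_nonneg _).trans hb
  have h1Δ : 0 < 1 - Δ := by linarith
  have hc' : |c| ≤ 1 + δ := by
    have := abs_sub_abs_le_abs_sub c 1
    rw [abs_one] at this; linarith
  have hcz : |c * z| ≤ (1 + δ) * (Δ * a / 2) := by
    rw [abs_mul]; gcongr
  have hζ' : 1 - Δ ≤ |ζ| := by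
    have := (abs_le.1 hζ).1
    exact le_trans (by linarith) (le_abs_self _)
  have hbase : (1 - Δ) * a ≤ |x + b + c * z| := by
    have h1 : |x| ≤ |x + b + c * z| + |b| + |c * z| := by
      have e : x = (x + b + c * z) - b - c * z := by ring
      calc |x| = |(x + b + c * z) - b - c * z| := by rw [← e]
        _ ≤ |(x + b + c * z) - b| + |c * z| := abs_sub _ _
        _ ≤ _ := by gcongr; exact abs_sub _ _
    have h2 : δ ≤ Δ / 4 * a := by nlinarith
    have h3 : δ * (Δ * a / 2) ≤ 1 / 4 * (Δ * a / 2) := by gcongr; linarith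
    have h4 : 0 < Δ * a := by positivity
    nlinarith
  rw [abs_mul, abs_mul, abs_pow, abs_of_pos hγ]
  have e : (1 - Δ) ^ k = (1 - Δ) * (1 - Δ) ^ (k - 1) := by
    rw [← pow_succ']; congr 1; omega
  calc γ * (1 - Δ) ^ k * a ^ (k - 1) = γ * (1 - Δ) * ((1 - Δ) * a) ^ (k - 1) := by
        rw [e, mul_pow]; ring
    _ ≤ _ := by gcongr

/-- once the perturbed polynomial process exceeds `m(Δ,L)`, within
`⌊(1+η) log_{k−1}(log_{k−1} n / max(log_{k−1} γ_n, 1))⌋` further steps it reaches `n^ε`,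
with conditional probability at least `1 − C' exp(−Δ² m(Δ,L)²/8)`. -/
theorem perturbed_process_second_stage
    (k : ℕ) (hk : 3 ≤ k) (C : ℝ) (hC : 0 < C)
    (Ω : Type) [MeasurableSpace Ω] (μ : Measure Ω) [IsProbabilityMeasure μ]
    (γ : ℕ → ℝ) (hγpos : ∀ n, 0 < γ n)
    (hγup : Tendsto (fun n : ℕ => Real.log (γ n) / Real.log n) atTop (nhds 0))
    (hγlow : Tendsto (fun n : ℕ => γ n * Real.log n ^ (((k : ℝ) - 2) / 2)) atTop atTop)
    (X ζ b c Z : ℕ → ℕ → Ω → ℝ)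
    (hmeas : ∀ n t, Measurable (ζ n t) ∧ Measurable (b n t) ∧ Measurable (c n t) ∧
      Measurable (Z n t))
    (hX0 : ∀ n ω, X n 0 ω = 0)
    (hXrec : ∀ n t ω,
      X n (t + 1) ω = γ n * ζ n t ω * (X n t ω + b n t ω + c n t ω * Z n t ω) ^ (k - 1))
    (hZlaw : ∀ n t, Measure.map (Z n t) μ = gaussianReal 0 1)
    (hZindep : ∀ n t, Indep (MeasurableSpace.comap (Z n t) inferInstance)
      ((⨆ s ∈ Set.Iic t,
          MeasurableSpace.comap (fun ω => (X n s ω, ζ n s ω, b n s ω, c n s ω)) inferInstance)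
        ⊔ (⨆ s ∈ Set.Iio t, MeasurableSpace.comap (Z n s) inferInstance)) μ)
    (hpert : ∀ n, ∀ᵐ ω ∂μ, ∀ t,
      |ζ n t ω - 1| ≤ (C + 1) * (n : ℝ) ^ (-(1 : ℝ) / 6) ∧
      |b n t ω| ≤ (C + 1) * (n : ℝ) ^ (-(1 : ℝ) / 6) ∧
      |c n t ω - 1| ≤ (C + 1) * (n : ℝ) ^ (-(1 : ℝ) / 6)) :
    ∃ C' : ℝ, 0 < C' ∧ ∀ η : ℝ, 0 < η → ∀ Δ : ℝ, 0 < Δ → Δ < 1 →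
      ∃ L₀ : ℝ, ∀ L : ℝ, L₀ ≤ L →
        ∀ᶠ n : ℕ in atTop,
          (C + 1) * (n : ℝ) ^ (-(1 : ℝ) / 6) < Δ →
          ∀ t : ℕ,
            μ {ω | max (((1 + Δ) / (γ n * (1 - Δ) ^ k)) ^ (1 / ((k : ℝ) - 2))) L
                ≤ |X n t ω|} ≠ 0 →
            ENNReal.ofReal (1 - C' * Real.exp
                (-Δ ^ 2 * (max (((1 + Δ) / (γ n * (1 - Δ) ^ k)) ^ (1 / ((k : ℝ) - 2))) L) ^ 2 / 8))
              ≤ μ[|{ω | max (((1 + Δ) / (γ n * (1 - Δ) ^ k)) ^ (1 / ((k : ℝ) - 2))) L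
                    ≤ |X n t ω|}]
                  {ω | (n : ℝ) ^ ((6 * (k : ℝ) - 11) / (12 * ((k : ℝ) - 1)))
                    ≤ |X n (t + Nat.floor ((1 + η) * logTerm k n (γ n))) ω|} := by
  have hXmeas : ∀ n t, Measurable (X n t) := by
    intro n t
    induction t with
    | zero =>
      have : X n 0 = fun _ => 0 := funext (hX0 n)
      rw [this]; exact measurable_const
    | succ t ih =>
      have : X n (t + 1) = fun ω =>
          γ n * ζ n t ω * (X n t ω + b n t ω + c n t ω * Z n t ω) ^ (k - 1) :=
        funext (hXrec n t)
      rw [this]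
      obtain ⟨h1, h2, h3, h4⟩ := hmeas n t
      fun_prop
  refine ⟨4, by norm_num, fun η hη Δ hΔ hΔ1 => ?_⟩
  refine ⟨max (max 1 (4 / Δ ^ 3)) (Real.exp (-(k * Real.log (1 - Δ)) / ((k : ℝ) - 2))),
    fun L hL => ?_⟩
  have hL1 : 1 ≤ L := ((le_max_left _ _).trans (le_max_left _ _)).trans hL
  have hL2 : 4 / Δ ^ 3 ≤ L := ((le_max_right _ _).trans (le_max_left _ _)).trans hL
  have hL3 := (le_max_right _ _).trans hL
  have hδ : Tendsto (fun n : ℕ => (C + 1) * (n : ℝ) ^ (-(1 : ℝ) / 6)) atTop (nhds 0) := by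
    have h := ((tendsto_rpow_neg_atTop (show (0 : ℝ) < 1 / 6 by norm_num)).comp
      (tendsto_natCast_atTop_atTop (R := ℝ))).const_mul (C + 1)
    rw [mul_zero] at h
    simpa [neg_div] using h
  filter_upwards [pps_growth k hk γ hγpos hγup η hη Δ hΔ hΔ1 L hL1 hL3,
    hδ.eventually_le_const (show (0 : ℝ) < Δ / 4 by positivity)] with n hgrow hδn _ t hA
  change μ {ω | ppsM k (γ n) Δ L ≤ |X n t ω|} ≠ 0 at hA
  change ENNReal.ofReal (1 - 4 * Real.exp (-Δ ^ 2 * (ppsM k (γ n) Δ L) ^ 2 / 8))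
    ≤ μ[|{ω | ppsM k (γ n) Δ L ≤ |X n t ω|}] _
  set m := ppsM k (γ n) Δ L with hm
  set g := γ n * (1 - Δ) ^ k with hg
  set N := Nat.floor ((1 + η) * logTerm k n (γ n)) with hN
  have hmL : L ≤ m := le_max_right _ _
  have hmpos : 0 < m := by linarith
  have h1Δ : 0 < 1 - Δ := by linarith
  have hgpos : 0 < g := mul_pos (hγpos n) (pow_pos h1Δ _)
  have hgm : 1 + Δ ≤ g * m ^ (k - 2) := ppsM_pow k hk (γ n) Δ L (hγpos n) hΔ hΔ1
  set a := ppsSeq k g m with ha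
  have ha1 : ∀ j, 1 ≤ a j := by
    intro j
    have h1 := ppsSeq_lower k hk g m Δ hgpos hmpos hΔ hgm j
    have h2 : 1 ≤ (1 + Δ) ^ j := one_le_pow₀ (by linarith)
    nlinarith
  set A := {ω | m ≤ |X n t ω|} with hAdef
  have hAm : MeasurableSet A := measurableSet_le measurable_const (hXmeas n t).abs
  have : IsProbabilityMeasure (μ[|A]) := cond_isProbabilityMeasure hA
  set Bad : ℕ → Set Ω := fun j => {ω | Δ * a j / 2 < |Z n (t + j) ω|} with hBad
  have hbad : ∀ j, μ[|A] (Bad j) ≤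
      ENNReal.ofReal (2 * Real.exp (-(Δ * a j / 2) ^ 2 / 2)) := by
    intro j
    have hS : MeasurableSet {z : ℝ | Δ * a j / 2 < |z|} :=
      measurableSet_lt measurable_const measurable_id.abs
    have hZm := (hmeas n (t + j)).2.2.2
    have hind := (Indep_iff _ _ μ).1 (hZindep n (t + j)) (Bad j) A ⟨_, hS, rfl⟩ (by
      have hle : MeasurableSpace.comap (fun ω => (X n t ω, ζ n t ω, b n t ω, c n t ω))
          inferInstance ≤
        ((⨆ s ∈ Set.Iic (t + j),
          MeasurableSpace.comap (fun ω => (X n s ω, ζ n s ω, b n s ω, c n s ω)) inferInstance)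
        ⊔ (⨆ s ∈ Set.Iio (t + j), MeasurableSpace.comap (Z n s) inferInstance)) :=
        le_sup_of_le_left (le_iSup₂_of_le (f := fun s (_ : s ∈ Set.Iic (t + j)) =>
          MeasurableSpace.comap (fun ω => (X n s ω, ζ n s ω, b n s ω, c n s ω)) inferInstance)
          t (Set.mem_Iic.2 (Nat.le_add_right t j)) le_rfl)
      refine hle A ?_
      refine ⟨{p | m ≤ |p.1|}, measurableSet_le measurable_const measurable_fst.abs, rfl⟩)
    rw [cond_apply hAm, Set.inter_comm, hind, mul_comm (μ (Bad j)), ← mul_assoc,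
      ENNReal.inv_mul_cancel hA (measure_ne_top _ _), one_mul]
    have : μ (Bad j) = gaussianReal 0 1 {z | Δ * a j / 2 < |z|} := by
      rw [← hZlaw n (t + j), Measure.map_apply hZm hS]; rfl
    rw [this]
    have := ha1 j
    exact pps_gauss_tail _ (by positivity)
  have hpert' : ∀ᵐ ω ∂(μ[|A]), _ := cond_absolutelyContinuous (hpert n)
  have hAae : ∀ᵐ ω ∂(μ[|A]), ω ∈ A := ae_cond_mem hAm
  set E := {ω | (n : ℝ) ^ ((6 * (k : ℝ) - 11) / (12 * ((k : ℝ) - 1))) ≤ |X n (t + N) ω|} with hE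
  have hEm : MeasurableSet E := measurableSet_le measurable_const (hXmeas n (t + N)).abs
  have hsub : μ[|A] Eᶜ ≤ μ[|A] (⋃ j ∈ Finset.range N, Bad j) := by
    apply measure_mono_ae
    filter_upwards [hpert', hAae] with ω hp hωA hωE
    by_contra hno
    apply hωE
    have hgood : ∀ j < N, |Z n (t + j) ω| ≤ Δ * a j / 2 := by
      intro j hj
      by_contra hlt
      exact hno (Set.mem_biUnion (Finset.mem_coe.2 (Finset.mem_range.2 hj)) (not_le.1 hlt))
    have hind : ∀ j ≤ N, a j ≤ |X n (t + j) ω| := by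
      intro j
      induction j with
      | zero => intro _; exact hωA
      | succ j ih =>
        intro hj
        obtain ⟨p1, p2, p3⟩ := hp (t + j)
        have := pps_step k (γ n) Δ _ (a j) (X n (t + j) ω) _ _ _ _ (hγpos n) hΔ hΔ1 hδn (ha1 j)
          (ih (by omega)) p1 p2 p3 (hgood j (by omega)) (by omega)
        rw [← hXrec] at this
        exact this
    exact hgrow.trans (hind N le_rfl)
  have hEc : μ[|A] Eᶜ ≤ ENNReal.ofReal (4 * Real.exp (-Δ ^ 2 * m ^ 2 / 8)) := by
    refine hsub.trans ((measure_biUnion_finset_le _ _).trans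
      ((Finset.sum_le_sum fun j _ => hbad j).trans ?_))
    rw [← ENNReal.ofReal_sum_of_nonneg (fun j _ => by positivity)]
    exact ENNReal.ofReal_le_ofReal
      (pps_sum k hk g m Δ hgpos hΔ (hL1.trans hmL) (hL2.trans hmL) hgm N)
  have hEeq : μ[|A] E = 1 - μ[|A] Eᶜ := by
    rw [← prob_compl_eq_one_sub hEm.compl, compl_compl]
  rw [hEeq, ENNReal.ofReal_sub _ (by positivity), ENNReal.ofReal_one]
  exact tsub_le_tsub_left hEc 1
end

section
/- Assume γ_n = n^{o(1)} and γ_n ≫ (log n)^{−(k−2)/2} as n → ∞, and let ε = ε_k = (6k − 11)/(12(k−1)). Define T̄_ε := min{t ∈ ℕ₊ : |X_t| ≥ n^ε}. Then for any fixed η > 0 and all sufficiently large n, with probability 1 − o_n(1): T̄_ε ≤ exp( ((1+η)/2) · (1/γ_n)^{2/(k−2)} ) + (1+η) · log_{k−1}( log_{k−1} n / max{log_{k−1} γ_n, 1} ). -/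
open MeasureTheory ProbabilityTheory Filter Real

lemma det_growth (d : ℕ) (hd : 1 ≤ d) (s δ M x g : ℝ) (hs : 0 < s) (hs1 : s ≤ 1)
    (hδ0 : 0 ≤ δ) (hδ : δ ≤ s / 100) (hM : 1 ≤ M) (hx : 0 < x) (hg : g * x ^ d = 1)
    (m : ℕ) (W : ℕ → ℝ) (hW0 : (1 + s) * x + M ≤ W 0)
    (hW : ∀ j < m, (1 - δ) * (g * W j ^ (d + 1)) - δ - (1 + δ) * (s / 8 * M * (1 + s / 4) ^ j)
      ≤ W (j + 1)) :
    ∀ j ≤ m, (1 + s / 4) ^ j * W 0 ≤ W j ∧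
      ((1 - s / 4) * (W 0 / x)) ^ ((d + 1) ^ j) ≤ (1 - s / 4) * (W j / x) ∧
      (1 + s) * W j ≤ g * W j ^ (d + 1) := by
  have hgpos : 0 < g := by
    have : 0 < x ^ d := by positivity
    by_contra h
    push Not at h
    nlinarith
  have key : ∀ w, W 0 ≤ w → (1 + s) * w ≤ g * w ^ (d + 1) := by
    intro w hw
    have h1 : (1 + s) * x ≤ w := by linarith
    have hw0 : 0 < w := lt_of_lt_of_le (by positivity) h1
    have h2 : ((1 + s) * x) ^ d ≤ w ^ d := pow_le_pow_left₀ (by positivity) h1 d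
    have h3 : (1 + s) ≤ (1 + s) ^ d := le_self_pow₀ (by linarith) (by omega)
    have h4 : (1 + s) ≤ g * w ^ d := by
      calc (1 + s) ≤ (1 + s) ^ d := h3
        _ = g * ((1 + s) * x) ^ d := by rw [mul_pow]; linear_combination (-(1 + s) ^ d) * hg
        _ ≤ _ := by gcongr
    calc (1 + s) * w ≤ (g * w ^ d) * w := by gcongr
      _ = _ := by ring
  have hW0pos : 0 < W 0 := lt_of_lt_of_le (by positivity) hW0
  have hMW : M ≤ W 0 := by nlinarith
  have hge : ∀ j, (1 + s / 4) ^ j * W 0 ≤ W j → W 0 ≤ W j := by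
    intro j h
    have : 1 ≤ (1 + s / 4) ^ j := one_le_pow₀ (by linarith)
    nlinarith
  intro j
  induction j with
  | zero =>
    intro _
    refine ⟨by simp, by simp, key _ le_rfl⟩
  | succ j ih =>
    intro hj
    obtain ⟨i1, i2, i3⟩ := ih (by omega)
    have hw := hW j (by omega)
    have hge0 := hge j i1
    have hwpos : 0 < W j := by linarith
    set P := g * W j ^ (d + 1) with hP
    have hh : M * (1 + s / 4) ^ j ≤ W j := by
      have : 0 < (1 + s / 4) ^ j := by positivity
      nlinarith
    have hb : δ + (1 + δ) * (s / 8 * M * (1 + s / 4) ^ j) ≤ s / 6 * W j := by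
      have e1 : δ ≤ s / 100 * W j := by nlinarith
      have e2 : (1 + δ) * (s / 8 * M * (1 + s / 4) ^ j) ≤ (1 + 1 / 100) * (s / 8 * W j) := by
        have : s / 8 * M * (1 + s / 4) ^ j ≤ s / 8 * W j := by
          rw [mul_assoc]; gcongr
        gcongr
        linarith
      nlinarith
    have hPW : W j ≤ P := by nlinarith
    have hmain : (1 - s / 4) * P ≤ W (j + 1) := by nlinarith
    have hstep : (1 + s / 4) * W j ≤ W (j + 1) := by nlinarith
    have hfirst : (1 + s / 4) ^ (j + 1) * W 0 ≤ W (j + 1) := by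
      calc _ = (1 + s / 4) * ((1 + s / 4) ^ j * W 0) := by ring
        _ ≤ (1 + s / 4) * W j := by gcongr
        _ ≤ _ := hstep
    refine ⟨hfirst, ?_, key _ (hge _ hfirst)⟩
    have hth : 0 < 1 - s / 4 := by linarith
    have hPx : P / x = (W j / x) ^ (d + 1) := by
      rw [div_pow, hP, div_eq_div_iff (by positivity) (by positivity)]
      linear_combination (W j ^ (d + 1) * x) * hg
    calc ((1 - s / 4) * (W 0 / x)) ^ ((d + 1) ^ (j + 1))
        = (((1 - s / 4) * (W 0 / x)) ^ ((d + 1) ^ j)) ^ (d + 1) := by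
          rw [← pow_mul, pow_succ]
      _ ≤ ((1 - s / 4) * (W j / x)) ^ (d + 1) := by
          gcongr
      _ = (1 - s / 4) ^ (d + 1) * (W j / x) ^ (d + 1) := mul_pow _ _ _
      _ ≤ (1 - s / 4) ^ 2 * (W j / x) ^ (d + 1) := by
          gcongr ?_ * _
          exact pow_le_pow_of_le_one hth.le (by linarith) (by omega)
      _ = (1 - s / 4) * (((1 - s / 4) * P) / x) := by rw [← hPx]; ring
      _ ≤ _ := by gcongr

lemma gauss_tail (a : ℝ) (ha : 0 ≤ a) :
    (√(2 * π))⁻¹ * exp (-(a + 1) ^ 2 / 2) ≤ (gaussianReal 0 1).real (Set.Ici a) := by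
  have h1 : (gaussianReal 0 1).real (Set.Icc a (a + 1)) ≤ (gaussianReal 0 1).real (Set.Ici a) :=
    measureReal_mono Set.Icc_subset_Ici_self
  refine le_trans ?_ h1
  rw [measureReal_def, gaussianReal_apply_eq_integral 0 one_ne_zero,
    ENNReal.toReal_ofReal (integral_nonneg fun x => gaussianPDFReal_nonneg _ _ _)]
  have h2 : ∫ x in Set.Icc a (a + 1), (√(2 * π))⁻¹ * exp (-(a + 1) ^ 2 / 2)
      = (√(2 * π))⁻¹ * exp (-(a + 1) ^ 2 / 2) := by
    simp
  rw [← h2]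
  refine setIntegral_mono_on (continuousOn_const.integrableOn_Icc) (integrable_gaussianPDFReal 0 1).integrableOn
    measurableSet_Icc ?_
  intro x hx
  simp only [gaussianPDFReal, NNReal.coe_one, mul_one, sub_zero]
  gcongr
  · linarith [hx.1]
  · exact hx.2

lemma gauss_cheb (h : ℝ) (hh : 0 < h) :
    (gaussianReal 0 1).real {x | h < |x|} ≤ 1 / h ^ 2 := by
  have := meas_ge_le_variance_div_sq (μ := gaussianReal 0 1) (X := id)
    (memLp_id_gaussianReal 2) hh
  rw [variance_id_gaussianReal] at this
  simp only [id, integral_id_gaussianReal, sub_zero, NNReal.coe_one] at this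
  rw [measureReal_def]
  refine ENNReal.toReal_le_of_le_ofReal (by positivity) (le_trans (measure_mono ?_) this)
  intro x hx
  exact le_of_lt (show h < |x| from hx)

lemma gauss_symm (a : ℝ) :
    (gaussianReal 0 1).real (Set.Iic (-a)) = (gaussianReal 0 1).real (Set.Ici a) := by
  have h : (gaussianReal 0 1).map (fun x => -x) = gaussianReal 0 1 := by
    rw [gaussianReal_map_neg]; simp
  rw [measureReal_def, measureReal_def]
  conv_lhs => rw [← h]
  rw [Measure.map_apply measurable_neg measurableSet_Iic]
  congr 2
  ext x; simp

/-- The sigma-algebra of the past (auxiliary). -/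
abbrev pastSig {Ω : Type} (X ζ b c Z : ℕ → Ω → ℝ) (t : ℕ) : MeasurableSpace Ω :=
  (⨆ s ∈ Set.Iic t,
          MeasurableSpace.comap (fun ω => (X s ω, ζ s ω, b s ω, c s ω)) inferInstance)
        ⊔ (⨆ s ∈ Set.Iio t, MeasurableSpace.comap (Z s) inferInstance)

lemma past_X {Ω : Type} (X ζ b c Z : ℕ → Ω → ℝ) (s t : ℕ) (h : s ≤ t) :
    Measurable[pastSig X ζ b c Z t] (X s) := by
  have h1 : MeasurableSpace.comap (fun ω => (X s ω, ζ s ω, b s ω, c s ω)) inferInstance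
      ≤ pastSig X ζ b c Z t :=
    le_trans (le_iSup₂_of_le (f := fun s (_ : s ∈ Set.Iic t) => MeasurableSpace.comap
      (fun ω => (X s ω, ζ s ω, b s ω, c s ω)) inferInstance) s h le_rfl) le_sup_left
  have h2 : Measurable[MeasurableSpace.comap (fun ω => (X s ω, ζ s ω, b s ω, c s ω))
      inferInstance] (fun ω => (X s ω, ζ s ω, b s ω, c s ω)) := comap_measurable _
  exact (measurable_fst.comp h2).mono h1 le_rfl

lemma past_Z {Ω : Type} (X ζ b c Z : ℕ → Ω → ℝ) (s t : ℕ) (h : s < t) :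
    Measurable[pastSig X ζ b c Z t] (Z s) := by
  have h1 : MeasurableSpace.comap (Z s) inferInstance
      ≤ pastSig X ζ b c Z t :=
    le_trans (le_iSup₂_of_le (f := fun s (_ : s ∈ Set.Iio t) => MeasurableSpace.comap
      (Z s) inferInstance) s h le_rfl) le_sup_right
  exact (comap_measurable (Z s)).mono h1 le_rfl

/-- Success event of a trial (auxiliary). -/
def trialEv {Ω : Type} (X Z : ℕ → Ω → ℝ) (a : ℝ) (t : ℕ) : Set Ω :=
  {ω | (0 ≤ X t ω ∧ a ≤ Z t ω) ∨ (X t ω < 0 ∧ Z t ω ≤ -a)}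

/-- No success before time `t` (auxiliary). -/
def noEv {Ω : Type} (X Z : ℕ → Ω → ℝ) (a : ℝ) (t : ℕ) : Set Ω :=
  {ω | ∀ s < t, ω ∉ trialEv X Z a s}

lemma trialEv_meas {Ω : Type} (m : MeasurableSpace Ω) (X Z : ℕ → Ω → ℝ) (a : ℝ) (t : ℕ)
    (hX : Measurable[m] (X t)) (hZ : Measurable[m] (Z t)) :
    MeasurableSet[m] (trialEv X Z a t) := by
  have : trialEv X Z a t = (X t ⁻¹' Set.Ici 0 ∩ Z t ⁻¹' Set.Ici a) ∪
      (X t ⁻¹' Set.Iio 0 ∩ Z t ⁻¹' Set.Iic (-a)) := by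
    ext; simp [trialEv]
  rw [this]
  exact ((hX measurableSet_Ici).inter (hZ measurableSet_Ici)).union
    ((hX measurableSet_Iio).inter (hZ measurableSet_Iic))

lemma noEv_meas {Ω : Type} (m : MeasurableSpace Ω) (X Z : ℕ → Ω → ℝ) (a : ℝ) (t : ℕ)
    (hX : ∀ s < t, Measurable[m] (X s)) (hZ : ∀ s < t, Measurable[m] (Z s)) :
    MeasurableSet[m] (noEv X Z a t) := by
  have : noEv X Z a t = ⋂ s, ⋂ (_ : s < t), (trialEv X Z a s)ᶜ := by
    ext; simp [noEv]
  rw [this]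
  exact MeasurableSet.iInter fun s => MeasurableSet.iInter fun h =>
    (trialEv_meas m X Z a s (hX s h) (hZ s h)).compl

lemma prob_bound {Ω : Type} [MeasurableSpace Ω] (μ : Measure Ω) [IsProbabilityMeasure μ]
    (X ζ b c Z : ℕ → Ω → ℝ) (hXm : ∀ t, Measurable (X t)) (hZm : ∀ t, Measurable (Z t))
    (hZlaw : ∀ t, Measure.map (Z t) μ = gaussianReal 0 1)
    (hind : ∀ t, Indep (MeasurableSpace.comap (Z t) inferInstance) (pastSig X ζ b c Z t) μ)
    (a p : ℝ) (hp0 : 0 ≤ p) (hp : p ≤ (gaussianReal 0 1).real (Set.Ici a)) (N m : ℕ) (h : ℕ → ℝ)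
    (hh : ∀ j, 0 < h j) :
    μ.real {ω | ¬ ∃ t < N, ω ∈ trialEv X Z a t ∧ ∀ j < m, |Z (t + j + 1) ω| ≤ h j}
      ≤ exp (-(N * p)) + ∑ j ∈ Finset.range m, 1 / (h j) ^ 2 := by
  set q := (gaussianReal 0 1).real (Set.Ici a) with hq
  have hind' : ∀ t (S : Set ℝ) (B : Set Ω), MeasurableSet S →
      MeasurableSet[pastSig X ζ b c Z t] B →
      μ.real (B ∩ Z t ⁻¹' S) = μ.real B * (gaussianReal 0 1).real S := by
    intro t S B hS hB
    have h1 := (Indep_iff _ _ μ).1 (hind t) (Z t ⁻¹' S) B ⟨S, hS, rfl⟩ hB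
    rw [Set.inter_comm, measureReal_def, h1, ENNReal.toReal_mul, mul_comm, measureReal_def,
      measureReal_def, ← hZlaw t, Measure.map_apply (hZm t) hS]
  set H := noEv X Z a with hH
  set F := trialEv X Z a with hF
  have hFm : ∀ t, MeasurableSet (F t) := fun t => trialEv_meas _ X Z a t (hXm t) (hZm t)
  have hHm : ∀ t, MeasurableSet (H t) := fun t =>
    noEv_meas _ X Z a t (fun s _ => hXm s) (fun s _ => hZm s)
  have hHF : ∀ t, μ.real (H t ∩ F t) = μ.real (H t) * q := by
    intro t
    have hHp : MeasurableSet[pastSig X ζ b c Z t] (H t) :=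
      noEv_meas _ X Z a t (fun s hs => past_X X ζ b c Z s t hs.le)
        (fun s hs => past_Z X ζ b c Z s t hs)
    have hXp := past_X X ζ b c Z t t le_rfl
    have e : H t ∩ F t = ((H t ∩ X t ⁻¹' Set.Ici 0) ∩ Z t ⁻¹' Set.Ici a) ∪
        ((H t ∩ X t ⁻¹' Set.Iio 0) ∩ Z t ⁻¹' Set.Iic (-a)) := by
      ext ω; simp only [hF, trialEv, Set.mem_inter_iff, Set.mem_ofPred_eq, Set.mem_union,
        Set.mem_preimage, Set.mem_Ici, Set.mem_Iio, Set.mem_Iic]; tauto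
    have e2 : H t = (H t ∩ X t ⁻¹' Set.Ici 0) ∪ (H t ∩ X t ⁻¹' Set.Iio 0) := by
      rw [← Set.inter_union_distrib_left, ← Set.preimage_union, Set.Ici_union_Iio]; simp
    have e3 : μ.real (H t) = μ.real (H t ∩ X t ⁻¹' Set.Ici 0) +
        μ.real (H t ∩ X t ⁻¹' Set.Iio 0) := by
      conv_lhs => rw [e2]
      rw [measureReal_union _ ((hHm t).inter (hXm t measurableSet_Iio))]
      rw [Set.disjoint_left]
      rintro ω ⟨_, h1⟩ ⟨_, h2⟩
      exact not_le.2 (show X t ω < 0 from h2) (show 0 ≤ X t ω from h1)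
    rw [e, measureReal_union _ (((hHm t).inter (hXm t measurableSet_Iio)).inter
      (hZm t measurableSet_Iic)), hind' t _ _ measurableSet_Ici
        (@MeasurableSet.inter _ (pastSig X ζ b c Z t) _ _ hHp (hXp measurableSet_Ici)),
      hind' t _ _ measurableSet_Iic
        (@MeasurableSet.inter _ (pastSig X ζ b c Z t) _ _ hHp (hXp measurableSet_Iio)),
      gauss_symm, e3]
    · ring
    · rw [Set.disjoint_left]
      rintro ω ⟨⟨_, h1⟩, _⟩ ⟨⟨_, h2⟩, _⟩
      exact not_le.2 (show X t ω < 0 from h2) (show 0 ≤ X t ω from h1)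
  have hHs : ∀ t, μ.real (H (t + 1)) = μ.real (H t) - μ.real (H t ∩ F t) := by
    intro t
    have e : H (t + 1) = H t \ F t := by
      ext ω
      simp only [hH, noEv, Set.mem_sdiff, Set.mem_ofPred_eq, Nat.lt_succ_iff_lt_or_eq]
      constructor
      · intro h; exact ⟨fun s hs => h s (Or.inl hs), h t (Or.inr rfl)⟩
      · rintro ⟨h1, h2⟩ s (hs | rfl)
        · exact h1 s hs
        · exact h2
    have := measureReal_inter_add_sdiff (μ := μ) (s := H t) (hFm t)
    rw [e]; linarith
  have hHN : ∀ t : ℕ, μ.real (H t) ≤ exp (-(t * p)) := by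
    intro t
    induction t with
    | zero => simp [measureReal_le_one]
    | succ t ih =>
      rw [hHs, hHF]
      have h0 : 0 ≤ μ.real (H t) := measureReal_nonneg
      have h1 : 1 - p ≤ exp (-p) := by linarith [add_one_le_exp (-p)]
      calc μ.real (H t) - μ.real (H t) * q ≤ μ.real (H t) * (1 - p) := by nlinarith
        _ ≤ μ.real (H t) * exp (-p) := by gcongr
        _ ≤ exp (-(t * p)) * exp (-p) := by gcongr
        _ = _ := by rw [← exp_add]; congr 1; push_cast; ring
  have hsum : ∀ t : ℕ, ∑ i ∈ Finset.range t, μ.real (H i ∩ F i) ≤ 1 - μ.real (H t) := by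
    intro t
    induction t with
    | zero => simp [measureReal_le_one]
    | succ t ih => rw [Finset.sum_range_succ, hHs]; linarith
  have hsub : {ω | ¬ ∃ t < N, ω ∈ F t ∧ ∀ j < m, |Z (t + j + 1) ω| ≤ h j} ⊆
      H N ∪ ⋃ t ∈ Finset.range N, ⋃ j ∈ Finset.range m,
        ((H t ∩ F t) ∩ Z (t + j + 1) ⁻¹' {x | h j < |x|}) := by
    classical
    intro ω hω
    by_cases hN : ω ∈ H N
    · exact Or.inl hN
    right
    have hN' : ∃ s, s < N ∧ ω ∈ F s := by
      simp only [hH, noEv, Set.mem_ofPred_eq] at hN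
      push Not at hN
      exact hN
    have hspec := Nat.find_spec hN'
    have hmin : ω ∈ H (Nat.find hN') := fun s hs hsF =>
      Nat.find_min hN' hs ⟨hs.trans hspec.1, hsF⟩
    have hω' : ¬ ∃ t < N, ω ∈ F t ∧ ∀ j < m, |Z (t + j + 1) ω| ≤ h j := hω
    push Not at hω'
    obtain ⟨j, hj, hjZ⟩ := hω' _ hspec.1 hspec.2
    simp only [Set.mem_iUnion, Finset.mem_range]
    exact ⟨_, hspec.1, j, hj, ⟨hmin, hspec.2⟩, hjZ⟩
  have hterm : ∀ t j, μ.real ((H t ∩ F t) ∩ Z (t + j + 1) ⁻¹' {x | h j < |x|}) ≤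
      μ.real (H t ∩ F t) * (1 / (h j) ^ 2) := by
    intro t j
    rw [hind' (t + j + 1) {x | h j < |x|} (H t ∩ F t)
      (measurableSet_lt measurable_const measurable_id.abs) (@MeasurableSet.inter _ (pastSig X ζ b c Z (t + j + 1)) _ _
        (noEv_meas _ X Z a t (fun s hs => past_X X ζ b c Z s _ (by omega))
        (fun s hs => past_Z X ζ b c Z s _ (by omega)))
        (trialEv_meas _ X Z a t (past_X X ζ b c Z t _ (by omega))
          (past_Z X ζ b c Z t _ (by omega))))]
    exact mul_le_mul_of_nonneg_left (gauss_cheb _ (hh j)) measureReal_nonneg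
  calc _ ≤ μ.real (H N ∪ ⋃ t ∈ Finset.range N, ⋃ j ∈ Finset.range m,
        ((H t ∩ F t) ∩ Z (t + j + 1) ⁻¹' {x | h j < |x|})) := measureReal_mono hsub
    _ ≤ μ.real (H N) + ∑ t ∈ Finset.range N, ∑ j ∈ Finset.range m,
        μ.real ((H t ∩ F t) ∩ Z (t + j + 1) ⁻¹' {x | h j < |x|}) := by
      refine (measureReal_union_le _ _).trans ?_
      gcongr
      refine (measureReal_biUnion_finset_le _ _).trans ?_
      gcongr
      exact measureReal_biUnion_finset_le _ _
    _ ≤ exp (-(N * p)) + ∑ t ∈ Finset.range N, ∑ j ∈ Finset.range m,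
        μ.real (H t ∩ F t) * (1 / (h j) ^ 2) := by
      gcongr
      · exact hHN N
      · exact hterm _ _
    _ = exp (-(N * p)) + (∑ t ∈ Finset.range N, μ.real (H t ∩ F t)) *
        ∑ j ∈ Finset.range m, (1 / (h j) ^ 2) := by
      rw [Finset.sum_mul_sum]
    _ ≤ exp (-(N * p)) + 1 * ∑ j ∈ Finset.range m, (1 / (h j) ^ 2) := by
      gcongr
      have := hsum N
      have h0 : 0 ≤ μ.real (H N) := measureReal_nonneg
      linarith
    _ = _ := by rw [one_mul]

lemma num_N (s M x : ℝ) (hs : 0 < s) (hs1 : s ≤ 1) (hM : 1 ≤ M) (hx : 0 ≤ x) :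
    √(2 * π) * exp (((1 + s) * ((1 + s) * x + M) + 1) ^ 2 / 2) * M + 1 ≤
      exp ((1 + s) ^ 5 / 2 * x ^ 2 + ((1 + 1 / s) * (9 / 2) + 4) * M ^ 2) := by
  set Y := ((1 + s) * ((1 + s) * x + M) + 1) ^ 2 / 2 with hY
  have hY0 : 0 ≤ Y := by positivity
  have hpi : √(2 * π) ≤ 3 := by
    rw [Real.sqrt_le_left (by norm_num)]
    have := Real.pi_lt_d2
    linarith
  have hYb : Y ≤ (1 + s) ^ 5 / 2 * x ^ 2 + (1 + 1 / s) * (9 / 2) * M ^ 2 := by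
    have h1 : (1 + s) * ((1 + s) * x + M) + 1 ≤ (1 + s) ^ 2 * x + 3 * M := by nlinarith
    have h2 : ((1 + s) * ((1 + s) * x + M) + 1) ^ 2 ≤ ((1 + s) ^ 2 * x + 3 * M) ^ 2 := by
      gcongr
    have h3 : ((1 + s) ^ 2 * x + 3 * M) ^ 2 ≤
        (1 + s) * ((1 + s) ^ 2 * x) ^ 2 + (1 + 1 / s) * (3 * M) ^ 2 := by
      set P := (1 + s) ^ 2 * x
      set Q := 3 * M
      have : (1 + s) * P ^ 2 + (1 + 1 / s) * Q ^ 2 - (P + Q) ^ 2 = (s * P - Q) ^ 2 / s := by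
        field_simp; ring
      have h4 : 0 ≤ (s * P - Q) ^ 2 / s := by positivity
      linarith
    rw [hY]
    calc _ ≤ ((1 + s) * ((1 + s) ^ 2 * x) ^ 2 + (1 + 1 / s) * (3 * M) ^ 2) / 2 := by
          linarith
      _ = _ := by ring
  have he1 : 1 ≤ exp Y := Real.one_le_exp hY0
  have h4M : 4 * M ≤ exp (4 * M ^ 2) := by
    have := add_one_le_exp (4 * M ^ 2)
    nlinarith
  calc √(2 * π) * exp Y * M + 1 ≤ 3 * exp Y * M + exp Y * M := by
        gcongr
        nlinarith
    _ = exp Y * (4 * M) := by ring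
    _ ≤ exp Y * exp (4 * M ^ 2) := by gcongr
    _ = exp (Y + 4 * M ^ 2) := (exp_add _ _).symm
    _ ≤ _ := by
        apply exp_le_exp.2
        linarith

lemma num_s (η : ℝ) (hη : 0 < η) : ∃ s : ℝ, 0 < s ∧ s ≤ 1 ∧ (1 + s) ^ 5 ≤ 1 + η / 2 := by
  refine ⟨min 1 (η / 62), by positivity, min_le_left _ _, ?_⟩
  set s := min 1 (η / 62)
  have h0 : 0 < s := by positivity
  have h1 : s ≤ 1 := min_le_left _ _
  have h2 : s ≤ η / 62 := min_le_right _ _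
  have h3 : (1 + s) ^ 5 ≤ 1 + 31 * s := by
    have a2 : s ^ 2 ≤ s := by nlinarith
    have a3 : s ^ 3 ≤ s := by nlinarith
    have a4 : s ^ 4 ≤ s := by nlinarith
    have a5 : s ^ 5 ≤ s := by nlinarith
    nlinarith
  linarith

lemma num_split (η K s M x Q : ℝ) (hη : 0 < η) (hK : 0 ≤ K)
    (hs5 : (1 + s) ^ 5 ≤ 1 + η / 2)
    (hQ : exp (((1 + η / 2) * 2 / η + 1) * K * M ^ 2) ≤ Q) :
    exp ((1 + s) ^ 5 / 2 * x ^ 2 + K * M ^ 2) ≤ exp ((1 + η) / 2 * x ^ 2) + Q := by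
  have hx2 : 0 ≤ x ^ 2 := sq_nonneg x
  have hb : (1 + s) ^ 5 / 2 * x ^ 2 ≤ (1 + η / 2) / 2 * x ^ 2 := by gcongr
  have hQ0 : 0 ≤ Q := (exp_pos _).le.trans hQ
  rcases le_total (K * M ^ 2) (η / 4 * x ^ 2) with h | h
  · have : exp ((1 + s) ^ 5 / 2 * x ^ 2 + K * M ^ 2) ≤ exp ((1 + η) / 2 * x ^ 2) := by
      apply exp_le_exp.2
      nlinarith
    linarith
  · have h2 : x ^ 2 ≤ 4 / η * (K * M ^ 2) := by
      rw [div_mul_eq_mul_div, le_div_iff₀ hη]; linarith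
    have : exp ((1 + s) ^ 5 / 2 * x ^ 2 + K * M ^ 2) ≤
        exp (((1 + η / 2) * 2 / η + 1) * K * M ^ 2) := by
      apply exp_le_exp.2
      calc (1 + s) ^ 5 / 2 * x ^ 2 + K * M ^ 2
          ≤ (1 + η / 2) / 2 * (4 / η * (K * M ^ 2)) + K * M ^ 2 := by
            have : (1 + η / 2) / 2 * x ^ 2 ≤ (1 + η / 2) / 2 * (4 / η * (K * M ^ 2)) := by gcongr
            linarith
        _ = _ := by ring
    have := exp_pos ((1 + η) / 2 * x ^ 2)
    linarith

lemma num_sum (s M : ℝ) (hs : 0 < s) (hM : 1 ≤ M) (m : ℕ) :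
    ∑ j ∈ Finset.range m, 1 / (s / 8 * M * (1 + s / 4) ^ j) ^ 2 ≤
      (64 / s ^ 2 * (1 - (1 + s / 4)⁻¹)⁻¹) / M := by
  have hr0 : 0 ≤ (1 + s / 4)⁻¹ := by positivity
  have hr1 : (1 + s / 4)⁻¹ < 1 := inv_lt_one_of_one_lt₀ (by linarith)
  calc ∑ j ∈ Finset.range m, 1 / (s / 8 * M * (1 + s / 4) ^ j) ^ 2
      ≤ ∑ j ∈ Finset.range m, (64 / s ^ 2 / M) * ((1 + s / 4)⁻¹) ^ j := by
        refine Finset.sum_le_sum fun j _ => ?_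
        have h1 : 1 ≤ (1 + s / 4) ^ j := one_le_pow₀ (by linarith)
        have : (64 / s ^ 2 / M) * ((1 + s / 4)⁻¹) ^ j = 1 / (s ^ 2 / 64 * M * (1 + s / 4) ^ j) := by
          rw [inv_pow]; field_simp
        rw [this]
        apply one_div_le_one_div_of_le (by positivity)
        have h2 : M * (1 + s / 4) ^ j ≤ (M * (1 + s / 4) ^ j) ^ 2 :=
          le_self_pow₀ (by nlinarith) (by norm_num)
        calc _ = s ^ 2 / 64 * (M * (1 + s / 4) ^ j) := by ring
          _ ≤ s ^ 2 / 64 * (M * (1 + s / 4) ^ j) ^ 2 := by gcongr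
          _ = _ := by ring
    _ = (64 / s ^ 2 / M) * ∑ j ∈ Finset.range m, ((1 + s / 4)⁻¹) ^ j := by
        rw [Finset.mul_sum]
    _ ≤ (64 / s ^ 2 / M) * (1 - (1 + s / 4)⁻¹)⁻¹ := by
        gcongr
        rw [← tsum_geometric_of_lt_one hr0 hr1]
        exact (summable_geometric_of_lt_one hr0 hr1).sum_le_tsum _ (fun _ _ => by positivity)
    _ = _ := by ring

/-- Final size after `m` growth steps. -/
lemma num_final (d : ℕ) (hd : 1 ≤ d) (n : ℕ) (hn : 2 ≤ n) (s M x g η κ ε v : ℝ) (hs : 0 < s)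
    (hs1 : s ≤ 1) (hM : 2 ≤ M) (hx : 0 < x) (hg : 0 < g) (hgx : g * x ^ d = 1) (hgn : g ≤ n)
    (hκ : 0 < κ)
    (hκ1 : κ ≤ log (1 + s / 2)) (hκ2 : κ ≤ log ((d : ℝ) + 1) / d) (hη : 0 < η) (hε : ε ≤ 1)
    (hv : (1 + s) * x + M ≤ v) (m : ℕ) (R : ℝ)
    (hRdef : R = logb ((d : ℝ) + 1) n / max (logb ((d : ℝ) + 1) g) 1)
    (hm : (1 + η / 4) * logb ((d : ℝ) + 1) R ≤ m)
    (hR : 2 * log ((d : ℝ) + 1) / κ ≤ R ^ (η / 4)) (hR0 : 0 < R) :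
    (n : ℝ) ^ ε ≤ x * ((1 - s / 4) * (v / x)) ^ ((d + 1) ^ m) := by
  have hd' : (1 : ℝ) ≤ d := by exact_mod_cast hd
  have hn' : (2 : ℝ) ≤ n := by exact_mod_cast hn
  set B : ℝ := (d : ℝ) + 1 with hB
  have hlB : 0 < log B := log_pos (by linarith)
  set G := max (logb B g) 1 with hG
  have hG1 : 1 ≤ G := le_max_right _ _
  have hbase : exp (κ * G) ≤ (1 - s / 4) * (v / x) := by
    rcases le_total (logb B g) 1 with h | h
    · have hG' : G = 1 := max_eq_right h
      rw [hG', mul_one]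
      have h1 : exp κ ≤ 1 + s / 2 := by
        rw [← Real.exp_log (show (0 : ℝ) < 1 + s / 2 by linarith)]
        exact exp_le_exp.2 hκ1
      have h2 : 1 + s ≤ v / x := by
        rw [le_div_iff₀ hx]; linarith
      nlinarith
    · have hG' : G = logb B g := max_eq_left h
      have hlg : 0 < log g := by
        have : 0 < logb B g := by linarith
        rw [Real.logb] at this
        exact (div_pos_iff_of_pos_right hlB).1 this
      have hlx : log g = d * log (1 / x) := by
        have := congrArg log hgx
        rw [log_mul hg.ne' (by positivity), log_pow, log_one] at this
        rw [one_div, log_inv]; linarith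
      have h1 : κ * G ≤ log (1 / x) := by
        rw [hG', Real.logb]
        calc κ * (log g / log B) ≤ log B / d * (log g / log B) := by
              have : 0 ≤ log g / log B := by positivity
              gcongr
          _ = log (1 / x) := by rw [hlx]; field_simp
      have h2 : exp (κ * G) ≤ 1 / x := by
        rw [← Real.exp_log (show (0 : ℝ) < 1 / x by positivity)]
        exact exp_le_exp.2 h1
      refine h2.trans ?_
      rw [← mul_div_assoc]
      gcongr
      have : M ≤ v := by nlinarith
      nlinarith
  have hpow : R * R ^ (η / 4) ≤ (B ^ m : ℝ) := by
    calc R * R ^ (η / 4) = R ^ (1 + η / 4) := by rw [rpow_add hR0, rpow_one]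
      _ = (B ^ logb B R) ^ (1 + η / 4) := by
        rw [Real.rpow_logb (by linarith) (by linarith) hR0]
      _ = B ^ ((1 + η / 4) * logb B R) := by
        rw [← rpow_mul (by linarith), mul_comm]
      _ ≤ B ^ (m : ℝ) := by
        apply rpow_le_rpow_of_exponent_le (by linarith) hm
      _ = _ := rpow_natCast _ _
  have hbig : (n : ℝ) ^ 2 ≤ ((1 - s / 4) * (v / x)) ^ ((d + 1) ^ m) := by
    calc (n : ℝ) ^ 2 = exp (2 * log n) := by
          rw [mul_comm, exp_mul, exp_log (by linarith)]; norm_cast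
      _ ≤ exp (κ * G * (B ^ m)) := by
          apply exp_le_exp.2
          have e1 : G * R = log n / log B := by
            rw [hRdef]; simp only [Real.logb]; field_simp
          calc 2 * log n = κ * (log n / log B) * (2 * log B / κ) := by field_simp
            _ ≤ κ * (log n / log B) * R ^ (η / 4) := by
              have : 0 ≤ log (n : ℝ) := log_nonneg (by linarith)
              gcongr
            _ = κ * G * (R * R ^ (η / 4)) := by rw [← e1]; ring
            _ ≤ _ := by gcongr
      _ = (exp (κ * G)) ^ ((d + 1) ^ m) := by
          rw [← Real.exp_nat_mul]; push_cast; rw [mul_comm]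
      _ ≤ _ := by gcongr
  have hxn : 1 / (n : ℝ) ≤ x := by
    have h1 : (1 / (n : ℝ)) ^ d ≤ x ^ d := by
      calc (1 / (n : ℝ)) ^ d ≤ (1 / (n : ℝ)) ^ 1 :=
            pow_le_pow_of_le_one (by positivity) (by rw [div_le_one (by linarith)]; linarith) hd
        _ = 1 / n := pow_one _
        _ ≤ 1 / g := one_div_le_one_div_of_le hg hgn
        _ = x ^ d := by field_simp; linarith
    exact (pow_le_pow_iff_left₀ (by positivity) hx.le (by omega)).1 h1
  calc (n : ℝ) ^ ε ≤ (n : ℝ) ^ (1 : ℝ) := rpow_le_rpow_of_exponent_le (by linarith) hε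
    _ = 1 / n * (n : ℝ) ^ 2 := by rw [rpow_one]; field_simp
    _ ≤ _ := by gcongr

lemma path_growth (d : ℕ) (hd : 1 ≤ d) (n : ℕ) (hn : 2 ≤ n) (s δ M x g η κ ε : ℝ) (hs : 0 < s)
    (hs1 : s ≤ 1) (hδ0 : 0 ≤ δ) (hδ : δ ≤ s / 100)
    (hM : 2 ≤ M) (hx : 0 < x) (hg : 0 < g) (hgx : g * x ^ d = 1) (hgn : g ≤ n)
    (hκ : 0 < κ)
    (hκ1 : κ ≤ log (1 + s / 2)) (hκ2 : κ ≤ log ((d : ℝ) + 1) / d) (hη : 0 < η) (hε : ε ≤ 1)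
    (m : ℕ) (R : ℝ)
    (hRdef : R = logb ((d : ℝ) + 1) n / max (logb ((d : ℝ) + 1) g) 1)
    (hm : (1 + η / 4) * logb ((d : ℝ) + 1) R ≤ m)
    (hR : 2 * log ((d : ℝ) + 1) / κ ≤ R ^ (η / 4)) (hR0 : 0 < R)
    (X ζ b c Z : ℕ → ℝ)
    (hXrec : ∀ t, X (t + 1) = g * ζ t * (X t + b t + c t * Z t) ^ (d + 1))
    (hpert : ∀ t, |ζ t - 1| ≤ δ ∧ |b t| ≤ δ ∧ |c t - 1| ≤ δ) (t : ℕ)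
    (htr : (0 ≤ X t ∧ (1 + s) * ((1 + s) * x + M) ≤ Z t) ∨
      (X t < 0 ∧ Z t ≤ -((1 + s) * ((1 + s) * x + M))))
    (hZ : ∀ j < m, |Z (t + j + 1)| ≤ s / 8 * M * (1 + s / 4) ^ j) :
    (n : ℝ) ^ ε ≤ |X (t + m + 1)| := by
  set W : ℕ → ℝ := fun j => |X (t + j) + b (t + j) + c (t + j) * Z (t + j)| with hWdef
  have hWnn : ∀ j, 0 ≤ W j := fun j => abs_nonneg _
  set A := (1 + s) * x + M with hA
  have hA1 : 1 ≤ A := by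
    have : 0 < (1 + s) * x := by positivity
    linarith
  have hAz : A ≤ (1 - δ) * ((1 + s) * A) - δ := by
    have q1 : δ * A ≤ s / 100 * A := by gcongr
    have q2 : δ * (s * A) ≤ δ * A := by
      have : s * A ≤ A := by nlinarith
      gcongr
    have q3 : δ ≤ δ * A := by nlinarith
    nlinarith
  have hW0 : A ≤ W 0 := by
    obtain ⟨-, hb, hc⟩ := hpert t
    rw [abs_le] at hb hc
    simp only [hWdef, add_zero]
    rcases htr with ⟨h1, h2⟩ | ⟨h1, h2⟩
    · refine le_trans ?_ (le_abs_self _)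
      have : (1 - δ) * ((1 + s) * A) ≤ c t * Z t := by
        have h3 : 0 ≤ 1 - δ := by linarith
        have h4 : 0 ≤ (1 + s) * A := by positivity
        apply mul_le_mul (by linarith) h2 h4 (by linarith)
      linarith
    · refine le_trans ?_ (neg_le_abs _)
      have : (1 - δ) * ((1 + s) * A) ≤ c t * (-Z t) := by
        have h3 : 0 ≤ 1 - δ := by linarith
        have h4 : 0 ≤ (1 + s) * A := by positivity
        apply mul_le_mul (by linarith) (by linarith) h4 (by linarith)
      linarith
  have hXl : ∀ j, (1 - δ) * (g * W j ^ (d + 1)) ≤ |X (t + j + 1)| := by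
    intro j
    obtain ⟨hz, -, -⟩ := hpert (t + j)
    rw [abs_le] at hz
    rw [hXrec, abs_mul, abs_mul, abs_of_pos hg, abs_pow]
    have h1 : 1 - δ ≤ |ζ (t + j)| := le_trans (by linarith) (le_abs_self _)
    have h2 : 0 ≤ g * W j ^ (d + 1) := mul_nonneg hg.le (pow_nonneg (hWnn j) _)
    calc (1 - δ) * (g * W j ^ (d + 1)) ≤ |ζ (t + j)| * (g * W j ^ (d + 1)) := by gcongr
      _ = _ := by simp only [hWdef]; ring
  have hstep : ∀ j < m, (1 - δ) * (g * W j ^ (d + 1)) - δ -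
      (1 + δ) * (s / 8 * M * (1 + s / 4) ^ j) ≤ W (j + 1) := by
    intro j hj
    obtain ⟨-, hb, hc⟩ := hpert (t + j + 1)
    have h1 := hXl j
    have hc' : |c (t + j + 1)| ≤ 1 + δ := by
      rw [abs_le] at hc ⊢; constructor <;> linarith
    have h2 : |c (t + j + 1) * Z (t + j + 1)| ≤ (1 + δ) * (s / 8 * M * (1 + s / 4) ^ j) := by
      rw [abs_mul]
      exact mul_le_mul hc' (hZ j hj) (abs_nonneg _) (by linarith)
    have h3 : |X (t + j + 1)| ≤ W (j + 1) + |b (t + j + 1)| + |c (t + j + 1) * Z (t + j + 1)| := by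
      have e : X (t + j + 1) = (X (t + (j + 1)) + b (t + (j + 1)) + c (t + (j + 1)) * Z (t + (j + 1)))
        - b (t + j + 1) - c (t + j + 1) * Z (t + j + 1) := by
        rw [← add_assoc]; ring
      calc |X (t + j + 1)| = _ := congrArg abs e
        _ ≤ _ := by
          refine (abs_sub _ _).trans ?_
          gcongr
          exact abs_sub _ _
    linarith
  obtain ⟨f1, f2, f3⟩ := det_growth d hd s δ M x g hs hs1 hδ0 hδ (by linarith) hx hgx m W hW0 hstep
    m le_rfl
  have hfin := num_final d hd n hn s M x g η κ ε (W 0) hs hs1 hM hx hg hgx hgn hκ hκ1 hκ2 hη hε hW0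
    m R hRdef hm hR hR0
  have hlast : W m ≤ (1 - δ) * ((1 + s) * W m) := by
    have q1 : 1 ≤ (1 - δ) * (1 + s) := by nlinarith
    have := hWnn m
    nlinarith
  calc (n : ℝ) ^ ε ≤ x * ((1 - s / 4) * (W 0 / x)) ^ ((d + 1) ^ m) := hfin
    _ ≤ x * ((1 - s / 4) * (W m / x)) := by gcongr
    _ = (1 - s / 4) * W m := by field_simp
    _ ≤ W m := by nlinarith [hWnn m]
    _ ≤ (1 - δ) * ((1 + s) * W m) := hlast
    _ ≤ (1 - δ) * (g * W m ^ (d + 1)) := by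
        have : 0 ≤ 1 - δ := by linarith
        gcongr
    _ ≤ _ := hXl m

/-- upper bound on the first time `T̄_ε` at which the perturbed polynomial
process exceeds `n^ε`. -/
theorem perturbed_process_hitting_time_upper_bound
    (k : ℕ) (hk : 3 ≤ k) (C : ℝ) (hC : 0 < C)
    (Ω : Type) [MeasurableSpace Ω] (μ : Measure Ω) [IsProbabilityMeasure μ]
    (γ : ℕ → ℝ) (hγpos : ∀ n, 0 < γ n)
    (hγup : Tendsto (fun n : ℕ => Real.log (γ n) / Real.log n) atTop (nhds 0))
    (hγlow : Tendsto (fun n : ℕ => γ n * Real.log n ^ (((k : ℝ) - 2) / 2)) atTop atTop)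
    (X ζ b c Z : ℕ → ℕ → Ω → ℝ)
    (hmeas : ∀ n t, Measurable (ζ n t) ∧ Measurable (b n t) ∧ Measurable (c n t) ∧
      Measurable (Z n t))
    (hX0 : ∀ n ω, X n 0 ω = 0)
    (hXrec : ∀ n t ω,
      X n (t + 1) ω = γ n * ζ n t ω * (X n t ω + b n t ω + c n t ω * Z n t ω) ^ (k - 1))
    (hZlaw : ∀ n t, Measure.map (Z n t) μ = gaussianReal 0 1)
    (hZindep : ∀ n t, Indep (MeasurableSpace.comap (Z n t) inferInstance)
      ((⨆ s ∈ Set.Iic t,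
          MeasurableSpace.comap (fun ω => (X n s ω, ζ n s ω, b n s ω, c n s ω)) inferInstance)
        ⊔ (⨆ s ∈ Set.Iio t, MeasurableSpace.comap (Z n s) inferInstance)) μ)
    (hpert : ∀ n, ∀ᵐ ω ∂μ, ∀ t,
      |ζ n t ω - 1| ≤ (C + 1) * (n : ℝ) ^ (-(1 : ℝ) / 6) ∧
      |b n t ω| ≤ (C + 1) * (n : ℝ) ^ (-(1 : ℝ) / 6) ∧
      |c n t ω - 1| ≤ (C + 1) * (n : ℝ) ^ (-(1 : ℝ) / 6)) :
    ∀ η : ℝ, 0 < η →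
      Tendsto (fun n : ℕ =>
          μ {ω | {t : ℕ | 1 ≤ t ∧
                (n : ℝ) ^ ((6 * (k : ℝ) - 11) / (12 * ((k : ℝ) - 1))) ≤ |X n t ω|}.Nonempty ∧
              ((sInf {t : ℕ | 1 ≤ t ∧
                  (n : ℝ) ^ ((6 * (k : ℝ) - 11) / (12 * ((k : ℝ) - 1))) ≤ |X n t ω|} : ℕ) : ℝ)
                ≤ Real.exp ((1 + η) / 2 * (1 / γ n) ^ (2 / ((k : ℝ) - 2)))
                  + (1 + η) * logTerm k n (γ n)})
        atTop (nhds 1) := by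
  intro η hη
  obtain ⟨d, rfl⟩ : ∃ d, k = d + 2 := ⟨k - 2, by omega⟩
  have hd : 1 ≤ d := by omega
  have hd' : (1 : ℝ) ≤ d := by exact_mod_cast hd
  have ek1 : ((d + 2 : ℕ) : ℝ) - 1 = (d : ℝ) + 1 := by push_cast; ring
  have ek2 : ((d + 2 : ℕ) : ℝ) - 2 = (d : ℝ) := by push_cast; ring
  have ek3 : d + 2 - 1 = d + 1 := by omega
  simp only [ek1, ek2, ek3, logTerm] at hXrec hγlow ⊢
  set ε : ℝ := (6 * ((d + 2 : ℕ) : ℝ) - 11) / (12 * ((d : ℝ) + 1)) with hεdef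
  have hε : ε ≤ 1 := by
    rw [hεdef, div_le_one (by positivity)]; push_cast; linarith
  set B : ℝ := (d : ℝ) + 1 with hB
  have hlB : 0 < log B := log_pos (by linarith)
  obtain ⟨s, hs, hs1, hs5⟩ := num_s η hη
  set K : ℝ := (1 + 1 / s) * (9 / 2) + 4 with hK
  set K' : ℝ := ((1 + η / 2) * 2 / η + 1) * K with hK'
  have hKpos : 0 < K := by positivity
  have hK'pos : 0 < K' := by positivity
  set κ : ℝ := min (log (1 + s / 2)) (log B / d) with hκdef
  have hκ : 0 < κ := lt_min (log_pos (by linarith)) (by positivity)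
  set R : ℕ → ℝ := fun n => logb B n / max (logb B (γ n)) 1 with hRdef
  set L : ℕ → ℝ := fun n => logb B (R n) with hLdef
  set M : ℕ → ℝ := fun n => √(log (L n) / (2 * K')) with hMdef
  set x : ℕ → ℝ := fun n => (1 / γ n) ^ (1 / (d : ℝ)) with hxdef
  set δ : ℕ → ℝ := fun n => (C + 1) * (n : ℝ) ^ (-(1 : ℝ) / 6) with hδdef
  have hlogn : Tendsto (fun n : ℕ => log (n : ℝ)) atTop atTop :=
    tendsto_log_atTop.comp tendsto_natCast_atTop_atTop
  have hRtop : Tendsto R atTop atTop := by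
    have h1 : Tendsto (fun n : ℕ => max (log (γ n) / log n) (log B / log n)) atTop (nhds 0) := by
      have := hγup.max (hlogn.const_div_atTop (log B))
      simpa using this
    have h2 : ∀ᶠ n : ℕ in atTop, 0 < log (n : ℝ) := hlogn.eventually_gt_atTop 0
    have h3 : Tendsto (fun n : ℕ => max (log (γ n) / log n) (log B / log n)) atTop
        (nhdsWithin 0 (Set.Ioi 0)) := by
      refine tendsto_nhdsWithin_iff.2 ⟨h1, ?_⟩
      filter_upwards [h2] with n hn
      exact lt_max_of_lt_right (div_pos hlB hn)
    refine (tendsto_inv_nhdsGT_zero.comp h3).congr' ?_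
    filter_upwards [h2] with n hn
    simp only [Function.comp, hRdef, Real.logb]
    have e1 : max (log (γ n) / log n) (log B / log n) = max (log (γ n)) (log B) / log n :=
      (max_div_div_right hn.le _ _)
    have e2 : max (log (γ n) / log B) 1 = max (log (γ n)) (log B) / log B := by
      rw [← max_div_div_right hlB.le, div_self hlB.ne']
    have : 0 < max (log (γ n)) (log B) := lt_max_of_lt_right hlB
    rw [e1, e2]
    field_simp
  have hLtop : Tendsto L atTop atTop :=
    (Real.tendsto_logb_atTop (by linarith)).comp hRtop
  have hMtop : Tendsto M atTop atTop :=
    tendsto_sqrt_atTop.comp ((tendsto_log_atTop.comp hLtop).atTop_div_const (by positivity))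
  have hδtop : Tendsto δ atTop (nhds 0) := by
    have h1 : Tendsto (fun n : ℕ => (n : ℝ) ^ (-(1 / 6 : ℝ))) atTop (nhds 0) :=
      (tendsto_rpow_neg_atTop (by norm_num)).comp tendsto_natCast_atTop_atTop
    have h2 := h1.const_mul (C + 1)
    rw [mul_zero] at h2
    refine h2.congr fun n => ?_
    simp only [hδdef]; norm_num
  have hXm : ∀ n t, Measurable (X n t) := by
    intro n t
    induction t with
    | zero =>
      have : X n 0 = fun _ => 0 := funext (hX0 n)
      rw [this]; exact measurable_const
    | succ t ih =>
      have : X n (t + 1) = fun ω => γ n * ζ n t ω * (X n t ω + b n t ω + c n t ω * Z n t ω) ^ (d + 1) :=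
        funext (hXrec n t)
      rw [this]
      obtain ⟨h1, h2, h3, h4⟩ := hmeas n t
      fun_prop
  set K2 : ℝ := 64 / s ^ 2 * (1 - (1 + s / 4)⁻¹)⁻¹ with hK2
  have herr : Tendsto (fun n => exp (-(M n)) + K2 / M n) atTop (nhds 0) := by
    have h1 : Tendsto (fun n => exp (-(M n))) atTop (nhds 0) :=
      tendsto_exp_neg_atTop_nhds_zero.comp hMtop
    simpa using h1.add (hMtop.const_div_atTop K2)
  set S : ℕ → Set Ω := fun n => {ω | {t : ℕ | 1 ≤ t ∧ (n : ℝ) ^ ε ≤ |X n t ω|}.Nonempty ∧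
      ((sInf {t : ℕ | 1 ≤ t ∧ (n : ℝ) ^ ε ≤ |X n t ω|} : ℕ) : ℝ)
        ≤ Real.exp ((1 + η) / 2 * (1 / γ n) ^ (2 / (d : ℝ))) + (1 + η) * L n} with hSdef
  have hmain : ∀ᶠ n in atTop, 1 - (exp (-(M n)) + K2 / M n) ≤ μ.real (S n) := by
    have hγn : ∀ᶠ n : ℕ in atTop, γ n ≤ n := by
      filter_upwards [hγup.eventually_lt_const (show (0 : ℝ) < 1 by norm_num),
        hlogn.eventually_gt_atTop 0, eventually_ge_atTop 1] with n h1 h2 h3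
      rw [div_lt_one h2] at h1
      have hn0 : (0 : ℝ) < n := by exact_mod_cast h3
      exact ((log_lt_log_iff (hγpos n) hn0).1 h1).le
    have hLs : ∀ᶠ n in atTop, √(L n) ≤ η / 4 * L n := by
      filter_upwards [(tendsto_sqrt_atTop.comp hLtop).eventually_ge_atTop (4 / η),
        hLtop.eventually_ge_atTop 0] with n h1 h2
      simp only [Function.comp] at h1
      rw [div_le_iff₀ hη] at h1
      have h3 := Real.mul_self_sqrt h2
      have h4 := Real.sqrt_nonneg (L n)
      nlinarith
    filter_upwards [hγn, hLs, eventually_ge_atTop 2, hMtop.eventually_ge_atTop 2,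
      hLtop.eventually_ge_atTop 1, hLtop.eventually_ge_atTop (2 / η),
      hδtop.eventually_le_const (show (0 : ℝ) < s / 100 by positivity),
      hRtop.eventually_gt_atTop 0,
      ((tendsto_rpow_atTop (show 0 < η / 4 by positivity)).comp hRtop).eventually_ge_atTop
        (2 * log B / κ)] with n hgn hLn hn hM hL1 hL2 hδs hR0 hRbig
    have hγ := hγpos n
    have hx : 0 < x n := by simp only [hxdef]; positivity
    have hxd : γ n * x n ^ d = 1 := by
      have : x n ^ d = 1 / γ n := by
        simp only [hxdef]
        rw [← rpow_natCast, ← rpow_mul (by positivity), one_div_mul_cancel (by positivity), rpow_one]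
      rw [this]; field_simp
    have hx2 : (1 / γ n) ^ (2 / (d : ℝ)) = x n ^ 2 := by
      simp only [hxdef]
      rw [← rpow_natCast, ← rpow_mul (by positivity)]; congr 1; push_cast; ring
    set a := (1 + s) * ((1 + s) * x n + M n) with ha
    have ha0 : 0 ≤ a := by positivity
    set N := ⌈√(2 * π) * exp ((a + 1) ^ 2 / 2) * M n⌉₊ with hN
    set m := ⌈(1 + η / 4) * L n⌉₊ with hm
    set p := (√(2 * π))⁻¹ * exp (-(a + 1) ^ 2 / 2) with hp
    have hNp : M n ≤ N * p := by
      have h1 : √(2 * π) * exp ((a + 1) ^ 2 / 2) * M n ≤ N := Nat.le_ceil _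
      have h2 : 0 < p := by positivity
      calc M n = (√(2 * π) * exp ((a + 1) ^ 2 / 2) * M n) * p := by
            have e : exp (-(a + 1) ^ 2 / 2) * exp ((a + 1) ^ 2 / 2) = 1 := by
              rw [← exp_add, ← exp_zero]; congr 1; ring
            have e2 : √(2 * π) * (√(2 * π))⁻¹ = 1 := mul_inv_cancel₀ (by positivity)
            rw [hp]
            calc M n = M n * (√(2 * π) * (√(2 * π))⁻¹) *
                (exp (-(a + 1) ^ 2 / 2) * exp ((a + 1) ^ 2 / 2)) := by rw [e, e2]; ring
              _ = _ := by ring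
        _ ≤ _ := by gcongr
    have hQ : exp (K' * M n ^ 2) ≤ η / 4 * L n := by
      refine le_trans (le_of_eq ?_) hLn
      have : M n ^ 2 = log (L n) / (2 * K') := by
        simp only [hMdef]
        exact Real.sq_sqrt (div_nonneg (log_nonneg hL1) (by positivity))
      rw [this, Real.sqrt_eq_rpow, rpow_def_of_pos (by linarith)]
      congr 1; field_simp
    have hNle : (N : ℝ) ≤ exp ((1 + η) / 2 * x n ^ 2) + η / 4 * L n := by
      have h1 : (N : ℝ) < √(2 * π) * exp ((a + 1) ^ 2 / 2) * M n + 1 :=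
        Nat.ceil_lt_add_one (by positivity)
      have h2 := num_N s (M n) (x n) hs hs1 (by linarith) hx.le
      have h3 := num_split η K s (M n) (x n) _ hη hKpos.le hs5 hQ
      linarith
    have hmle : (m : ℝ) ≤ (1 + η / 4) * L n + 1 :=
      (Nat.ceil_lt_add_one (by positivity)).le
    have htot : (N : ℝ) + m ≤ exp ((1 + η) / 2 * (1 / γ n) ^ (2 / (d : ℝ))) + (1 + η) * L n := by
      rw [hx2]
      rw [div_le_iff₀ hη] at hL2
      linarith
    have hprob := prob_bound μ (X n) (ζ n) (b n) (c n) (Z n) (hXm n) (fun t => (hmeas n t).2.2.2)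
      (hZlaw n) (hZindep n) a p (by positivity) (gauss_tail a ha0) N m
      (fun j => s / 8 * M n * (1 + s / 4) ^ j) (fun j => by positivity)
    set bad := {ω | ¬ ∃ t < N, ω ∈ trialEv (X n) (Z n) a t ∧
      ∀ j < m, |Z n (t + j + 1) ω| ≤ s / 8 * M n * (1 + s / 4) ^ j} with hbad
    have hbadle : μ.real bad ≤ exp (-(M n)) + K2 / M n := by
      refine hprob.trans ?_
      gcongr
      exact num_sum s (M n) hs (by linarith) m
    have hae : ∀ᵐ ω ∂μ, ω ∈ S n ∪ bad := by
      filter_upwards [hpert n] with ω hω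
      by_cases hb : ω ∈ bad
      · exact Or.inr hb
      left
      have hb' : ∃ t < N, ω ∈ trialEv (X n) (Z n) a t ∧
        ∀ j < m, |Z n (t + j + 1) ω| ≤ s / 8 * M n * (1 + s / 4) ^ j := by
        by_contra hcon
        exact hb hcon
      obtain ⟨t, htN, htr, hZb⟩ := hb'
      have hpg := path_growth d hd n hn s (δ n) (M n) (x n) (γ n) η κ ε hs hs1
        (by simp only [hδdef]; positivity) hδs hM hx hγ hxd hgn hκ (min_le_left _ _)
        (min_le_right _ _) hη hε m (R n) rfl (Nat.le_ceil _) hRbig hR0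
        (fun t => X n t ω) (fun t => ζ n t ω) (fun t => b n t ω) (fun t => c n t ω)
        (fun t => Z n t ω) (fun t => hXrec n t ω) hω t htr hZb
      have hmem : t + m + 1 ∈ {t : ℕ | 1 ≤ t ∧ (n : ℝ) ^ ε ≤ |X n t ω|} := ⟨by omega, hpg⟩
      refine ⟨⟨_, hmem⟩, ?_⟩
      have h1 : sInf {t : ℕ | 1 ≤ t ∧ (n : ℝ) ^ ε ≤ |X n t ω|} ≤ N + m :=
        (Nat.sInf_le hmem).trans (by omega)
      calc _ ≤ ((N + m : ℕ) : ℝ) := by exact_mod_cast h1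
        _ ≤ _ := by push_cast; exact htot
    have h1 : μ.real (S n ∪ bad) = 1 := by
      have h0 : (S n ∪ bad : Set Ω) =ᵐ[μ] Set.univ := by
        filter_upwards [hae] with ω hω
        exact propext ⟨fun _ => trivial, fun _ => hω⟩
      rw [measureReal_congr h0]; simp
    have h2 := measureReal_union_le (μ := μ) (S n) bad
    linarith
  have hreal : Tendsto (fun n => μ.real (S n)) atTop (nhds 1) := by
    refine tendsto_of_tendsto_of_tendsto_of_le_of_le' (g := fun n => 1 - (exp (-(M n)) + K2 / M n))
      (h := fun _ => 1) ?_ tendsto_const_nhds hmain (Eventually.of_forall fun n => measureReal_le_one)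
    simpa using herr.const_sub 1
  have := ENNReal.tendsto_ofReal hreal
  rw [ENNReal.ofReal_one] at this
  refine this.congr fun n => ?_
  exact ofReal_measureReal
end
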